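/- arXiv:2412.20708 — 14 statements merged into one kernel-verified Lean document; each statement's English description precedes it below -/
import Mathlib

section
/- Let Ξ be a nonempty compact subset of ℝ^d, let ψ_1, …, ψ_m : Ξ → ℝ be bounded Borel measurable functions, let γ_1, …, γ_m ∈ ℝ, and let 𝒫 be the associated ambiguity set. Let P ∈ 𝒫 and let Q : Ξ → ℝ be Borel measurable and P-integrable. Then for every ε > 0 there exists a finitely supported probability measure ∑_{j=1}^n p_j δ_{ξ_j} on Ξ that is ε-feasible, i.e. ∑_{j=1}^n p_j ψ_i(ξ_j) ≤ γ_i + ε for every i ∈ {1,…,m}, and that is an ε-approximation of P, i.e. |∫_Ξ Q dP − ∑_{j=1}^n p_j Q(ξ_j)| ≤ ε. -/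
open MeasureTheory Filter

/-- For any `P` in the moment-based ambiguity set and any `ε > 0`,
there is an `ε`-feasible finitely supported probability distribution on `Ξ` that is an
`ε`-approximation of `P`. -/
theorem eps_feasible_eps_approximation
    (d m : ℕ) (Ξ : Set (EuclideanSpace ℝ (Fin d)))
    (hΞne : Ξ.Nonempty) (hΞc : IsCompact Ξ)
    (ψ : Fin m → EuclideanSpace ℝ (Fin d) → ℝ)
    (hψm : ∀ i, Measurable (ψ i)) (hψb : ∀ i, ∃ C, ∀ x ∈ Ξ, |ψ i x| ≤ C)
    (γ : Fin m → ℝ)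
    (P : Measure (EuclideanSpace ℝ (Fin d))) [IsProbabilityMeasure P]
    (hPΞ : P Ξᶜ = 0)
    (hPamb : ∀ i, ∫ x, ψ i x ∂P ≤ γ i)
    (Q : EuclideanSpace ℝ (Fin d) → ℝ) (hQm : Measurable Q)
    (hQint : Integrable Q P)
    (ε : ℝ) (hε : 0 < ε) :
    ∃ (n : ℕ) (ξ : Fin n → EuclideanSpace ℝ (Fin d)) (p : Fin n → ℝ),
      (∀ j, ξ j ∈ Ξ) ∧ (∀ j, 0 ≤ p j) ∧ (∑ j, p j = 1) ∧
      (∀ i, ∑ j, p j * ψ i (ξ j) ≤ γ i + ε) ∧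
      |(∫ x, Q x ∂P) - ∑ j, p j * Q (ξ j)| ≤ ε := by
  have hae : ∀ᵐ x ∂P, x ∈ Ξ := by
    rw [ae_iff]; exact hPΞ
  have hψi : ∀ i, Integrable (ψ i) P := by
    intro i
    obtain ⟨C, hC⟩ := hψb i
    refine Integrable.of_bound (hψm i).aestronglyMeasurable C ?_
    filter_upwards [hae] with x hx
    simpa using hC x hx
  let F : EuclideanSpace ℝ (Fin d) → (Fin m → ℝ) × ℝ := fun x => (fun i => ψ i x, Q x)
  have hpi : Integrable (fun x => fun i => ψ i x) P := Integrable.of_eval hψi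
  have hF : Integrable F P := hpi.prodMk hQint
  have hmem : ∫ x, F x ∂P ∈ closure (convexHull ℝ (F '' Ξ)) := by
    refine (convex_convexHull ℝ _).closure.integral_mem isClosed_closure ?_ hF
    filter_upwards [hae] with x hx
    exact subset_closure (subset_convexHull ℝ _ ⟨x, hx, rfl⟩)
  obtain ⟨y, hy, hd⟩ := Metric.mem_closure_iff.1 hmem ε hε
  obtain ⟨ι, _, w, z, hw, hw1, hz, hsum⟩ := mem_convexHull_iff_exists_fintype.1 hy
  choose ξ hξ hξz using hz
  have h1 : (∫ x, F x ∂P).1 = fun i => ∫ x, ψ i x ∂P := by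
    rw [fst_integral hF]
    funext i
    exact eval_integral hψi i
  have h2 : (∫ x, F x ∂P).2 = ∫ x, Q x ∂P := snd_integral hF
  have y1 : ∀ i, y.1 i = ∑ j, w j * ψ i (ξ j) := by
    intro i
    rw [← hsum, Prod.fst_sum, Finset.sum_apply]
    refine Finset.sum_congr rfl fun j _ => ?_
    rw [← hξz j]; rfl
  have y2 : y.2 = ∑ j, w j * Q (ξ j) := by
    rw [← hsum, Prod.snd_sum]
    refine Finset.sum_congr rfl fun j _ => ?_
    rw [← hξz j]; rfl
  rw [Prod.dist_eq, max_lt_iff, h1, h2] at hd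
  obtain ⟨hd1, hd2⟩ := hd
  let e := (Fintype.equivFin ι).symm
  refine ⟨Fintype.card ι, fun j => ξ (e j), fun j => w (e j), fun j => hξ _, fun j => hw _, ?_, ?_, ?_⟩
  · rw [← hw1]; exact e.sum_comp w
  · intro i
    rw [e.sum_comp (fun j => w j * ψ i (ξ j)), ← y1 i]
    have h := (dist_le_pi_dist _ _ i).trans hd1.le
    rw [Real.dist_eq] at h
    have := (abs_le.1 h).1
    linarith [hPamb i]
  · rw [e.sum_comp (fun j => w j * Q (ξ j)), ← y2, ← Real.dist_eq]
    exact hd2.le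
end

section
/- Let Ξ be a nonempty compact subset of ℝ^d, let ψ_1, …, ψ_m : Ξ → ℝ be bounded Borel measurable functions, let γ_1, …, γ_m ∈ ℝ, let 𝒫 be the associated ambiguity set, assumed nonempty, and let Q : Ξ → ℝ be bounded and Borel measurable. Then for every ε > 0 there exists a finitely supported probability measure ∑_{j=1}^n p_j δ_{ξ_j} on Ξ with ∑_{j=1}^n p_j ψ_i(ξ_j) ≤ γ_i + ε for every i ∈ {1,…,m} and |sup_{P ∈ 𝒫} ∫_Ξ Q dP − ∑_{j=1}^n p_j Q(ξ_j)| ≤ ε; that is, an ε-feasible discrete distribution that is ε-optimal for the worst-case expected value problem. -/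
open MeasureTheory Filter

/-- If the ambiguity set is nonempty and `Q` is bounded Borel
measurable, then for every `ε > 0` there is an `ε`-feasible finitely supported
probability distribution on `Ξ` that is `ε`-optimal for the worst-case expected value
problem. -/
theorem eps_feasible_eps_optimal_for_WCEV
    (d m : ℕ) (Ξ : Set (EuclideanSpace ℝ (Fin d)))
    (hΞne : Ξ.Nonempty) (hΞc : IsCompact Ξ)
    (ψ : Fin m → EuclideanSpace ℝ (Fin d) → ℝ)
    (hψm : ∀ i, Measurable (ψ i)) (hψb : ∀ i, ∃ C, ∀ x ∈ Ξ, |ψ i x| ≤ C)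
    (γ : Fin m → ℝ)
    (hamb : ∃ P : Measure (EuclideanSpace ℝ (Fin d)),
      IsProbabilityMeasure P ∧ P Ξᶜ = 0 ∧ ∀ i, ∫ x, ψ i x ∂P ≤ γ i)
    (Q : EuclideanSpace ℝ (Fin d) → ℝ) (hQm : Measurable Q)
    (hQb : ∃ C, ∀ x ∈ Ξ, |Q x| ≤ C)
    (ε : ℝ) (hε : 0 < ε) :
    ∃ (n : ℕ) (ξ : Fin n → EuclideanSpace ℝ (Fin d)) (p : Fin n → ℝ),
      (∀ j, ξ j ∈ Ξ) ∧ (∀ j, 0 ≤ p j) ∧ (∑ j, p j = 1) ∧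
      (∀ i, ∑ j, p j * ψ i (ξ j) ≤ γ i + ε) ∧
      |sSup {r : ℝ | ∃ P : Measure (EuclideanSpace ℝ (Fin d)),
          (IsProbabilityMeasure P ∧ P Ξᶜ = 0 ∧ ∀ i, ∫ x, ψ i x ∂P ≤ γ i) ∧
          (∫ x, Q x ∂P) = r} - ∑ j, p j * Q (ξ j)| ≤ ε := by
  classical
  set S : Set ℝ := {r : ℝ | ∃ P : Measure (EuclideanSpace ℝ (Fin d)),
          (IsProbabilityMeasure P ∧ P Ξᶜ = 0 ∧ ∀ i, ∫ x, ψ i x ∂P ≤ γ i) ∧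
          (∫ x, Q x ∂P) = r} with hS
  have hSne : S.Nonempty := by
    obtain ⟨P, hP⟩ := hamb
    exact ⟨_, P, hP, rfl⟩
  have hSb : BddAbove S := by
    obtain ⟨C, hC⟩ := hQb
    refine ⟨C, ?_⟩
    rintro r ⟨P, ⟨hP1, hP2, -⟩, rfl⟩
    have hae : ∀ᵐ x ∂P, ‖Q x‖ ≤ C := by
      have : ∀ᵐ x ∂P, x ∈ Ξ := hP2
      filter_upwards [this] with x hx using hC x hx
    have h := norm_integral_le_of_norm_le_const hae
    have h2 : ‖∫ x, Q x ∂P‖ ≤ C := by simpa using h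
    exact (le_abs_self _).trans h2
  obtain ⟨r, ⟨P, ⟨hP1, hP2, hP3⟩, rfl⟩, hr⟩ :=
    exists_lt_of_lt_csSup hSne (show sSup S - ε / 2 < sSup S by linarith)
  have hle : (∫ x, Q x ∂P) ≤ sSup S := le_csSup hSb ⟨P, ⟨hP1, hP2, hP3⟩, rfl⟩
  have hmem : ∀ᵐ x ∂P, x ∈ Ξ := hP2
  let F : EuclideanSpace ℝ (Fin d) → Option (Fin m) → ℝ :=
    fun x o => o.elim (Q x) (fun i => ψ i x)
  have hint : ∀ o, Integrable (fun x => F x o) P := by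
    intro o
    cases o with
    | none =>
      obtain ⟨C, hC⟩ := hQb
      refine Integrable.of_bound hQm.aestronglyMeasurable C ?_
      filter_upwards [hmem] with x hx using hC x hx
    | some i =>
      obtain ⟨C, hC⟩ := hψb i
      refine Integrable.of_bound (hψm i).aestronglyMeasurable C ?_
      filter_upwards [hmem] with x hx using hC x hx
  have hF : Integrable F P := Integrable.of_eval hint
  have hcl : (∫ x, F x ∂P) ∈ closure (convexHull ℝ (F '' Ξ)) := by
    refine (convex_convexHull ℝ _).closure.integral_mem isClosed_closure ?_ hF
    filter_upwards [hmem] with x hx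
    exact subset_closure (subset_convexHull ℝ _ ⟨x, hx, rfl⟩)
  obtain ⟨y, hy, hyd⟩ := Metric.mem_closure_iff.1 hcl (ε / 2) (by linarith)
  have hcoord : ∀ o, |(∫ x, F x o ∂P) - y o| < ε / 2 := by
    intro o
    have h1 := (dist_le_pi_dist (∫ x, F x ∂P) y o).trans_lt hyd
    rwa [eval_integral hint, Real.dist_eq] at h1
  obtain ⟨ι, _, w, z, hw0, hw1, hz, hsum⟩ := mem_convexHull_iff_exists_fintype.1 hy
  choose u hu hFu using hz
  let e := Fintype.equivFin ι
  have key : ∀ o, ∑ j, w (e.symm j) * F (u (e.symm j)) o = y o := by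
    intro o
    rw [e.symm.sum_comp (fun i => w i * F (u i) o), ← hsum]
    simp [Finset.sum_apply, hFu]
  refine ⟨Fintype.card ι, fun j => u (e.symm j), fun j => w (e.symm j),
    fun j => hu _, fun j => hw0 _, ?_, ?_, ?_⟩
  · rw [e.symm.sum_comp w, hw1]
  · intro i
    have h1 : ∑ j, w (e.symm j) * ψ i (u (e.symm j)) = y (some i) := key (some i)
    have h2 : |(∫ x, ψ i x ∂P) - y (some i)| < ε / 2 := hcoord (some i)
    have h3 := hP3 i
    rw [h1]
    linarith [(abs_lt.1 h2).1]
  · have h1 : ∑ j, w (e.symm j) * Q (u (e.symm j)) = y none := key none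
    have h2 : |(∫ x, Q x ∂P) - y none| < ε / 2 := hcoord none
    rw [h1]
    rw [abs_lt] at h2
    rw [abs_le]
    constructor <;> linarith [h2.1, h2.2]
end

section
/- Let Ξ be a nonempty compact subset of ℝ^d, let Q : Ξ → ℝ be bounded and upper semicontinuous, let ψ_1, …, ψ_m : Ξ → ℝ be bounded and lower semicontinuous, let γ_1, …, γ_m ∈ ℝ, and suppose the ambiguity set 𝒫 is nonempty. Then the worst-case expected value is attained: there exists P* ∈ 𝒫 with ∫_Ξ Q dP* = sup_{P ∈ 𝒫} ∫_Ξ Q dP. -/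
open MeasureTheory Filter

theorem WCEV_lsc_integral {X : Type*} [TopologicalSpace X] [TopologicalSpace.PseudoMetrizableSpace X]
    [TopologicalSpace.SeparableSpace X]
    [MeasurableSpace X] [BorelSpace X] (f : X → ℝ) (hf : LowerSemicontinuous f)
    (C : ℝ) (hC : ∀ x, |f x| ≤ C) :
    LowerSemicontinuous (fun μ : ProbabilityMeasure X => ∫ x, f x ∂(μ : Measure X)) := by
  have hm : Measurable f := hf.measurable
  have hnn : ∀ x, 0 ≤ f x + C := fun x => by linarith [abs_le.1 (hC x)]
  have hint : ∀ μ : ProbabilityMeasure X, Integrable f (μ : Measure X) := fun μ =>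
    Integrable.of_bound hm.aestronglyMeasurable C (Eventually.of_forall hC)
  have hG : LowerSemicontinuous (fun μ : ProbabilityMeasure X =>
      ∫⁻ x, ENNReal.ofReal (f x + C) ∂(μ : Measure X)) := by
    rw [lowerSemicontinuous_iff_le_liminf]
    intro μ
    simp_rw [lintegral_eq_lintegral_meas_lt _ (Eventually.of_forall hnn)
      (hm.add_const C).aemeasurable]
    refine le_trans (lintegral_mono (fun t => ?_)) (lintegral_liminf_le (fun ν =>
      Antitone.measurable (fun s t hst => measure_mono (fun ω hω => lt_of_le_of_lt hst hω))))
    apply ProbabilityMeasure.le_liminf_measure_open_of_tendsto (μs := fun ν => ν) tendsto_id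
    have : {a | t < f a + C} = f ⁻¹' Set.Ioi (t - C) := by
      ext a; simp [sub_lt_iff_lt_add]
    rw [this]
    exact hf.isOpen_preimage _
  have key : ∀ μ : ProbabilityMeasure X, ∫ x, f x ∂(μ : Measure X) + C =
      (∫⁻ x, ENNReal.ofReal (f x + C) ∂(μ : Measure X)).toReal := by
    intro μ
    rw [← integral_eq_lintegral_of_nonneg_ae (Eventually.of_forall hnn)
      (hm.add_const C).aestronglyMeasurable, integral_add (hint μ) (integrable_const C)]
    simp
  have hfin : ∀ μ : ProbabilityMeasure X,
      ∫⁻ x, ENNReal.ofReal (f x + C) ∂(μ : Measure X) ≠ ⊤ := fun μ =>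
    (((hint μ).add (integrable_const C)).lintegral_lt_top).ne
  intro μ y hy
  rcases lt_or_ge (y + C) 0 with h | h
  · refine Eventually.of_forall fun ν => ?_
    have := key ν
    have h2 : 0 ≤ (∫⁻ x, ENNReal.ofReal (f x + C) ∂(ν : Measure X)).toReal := ENNReal.toReal_nonneg
    change y < ∫ x, f x ∂(ν : Measure X)
    linarith
  · have h1 : ENNReal.ofReal (y + C) < ∫⁻ x, ENNReal.ofReal (f x + C) ∂(μ : Measure X) := by
      rw [ENNReal.ofReal_lt_iff_lt_toReal h (hfin μ), ← key]
      change y < ∫ x, f x ∂(μ : Measure X) at hy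
      linarith
    filter_upwards [hG μ _ h1] with ν hν
    rw [gt_iff_lt, ENNReal.ofReal_lt_iff_lt_toReal h (hfin ν), ← key] at hν
    change y < ∫ x, f x ∂(ν : Measure X)
    linarith

/-- If `Q` is bounded and upper semicontinuous on the nonempty compact
set `Ξ`, the `ψ_i` are bounded and lower semicontinuous on `Ξ`, and the ambiguity set is
nonempty, then the worst-case expected value is attained. -/
theorem WCEV_attained
    (d m : ℕ) (Ξ : Set (EuclideanSpace ℝ (Fin d)))
    (hΞne : Ξ.Nonempty) (hΞc : IsCompact Ξ)
    (Q : EuclideanSpace ℝ (Fin d) → ℝ)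
    (hQu : UpperSemicontinuousOn Q Ξ) (hQb : ∃ C, ∀ x ∈ Ξ, |Q x| ≤ C)
    (ψ : Fin m → EuclideanSpace ℝ (Fin d) → ℝ)
    (hψl : ∀ i, LowerSemicontinuousOn (ψ i) Ξ)
    (hψb : ∀ i, ∃ C, ∀ x ∈ Ξ, |ψ i x| ≤ C)
    (γ : Fin m → ℝ)
    (hamb : ∃ P : Measure (EuclideanSpace ℝ (Fin d)),
      IsProbabilityMeasure P ∧ P Ξᶜ = 0 ∧ ∀ i, ∫ x, ψ i x ∂P ≤ γ i) :
    ∃ P : Measure (EuclideanSpace ℝ (Fin d)),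
      (IsProbabilityMeasure P ∧ P Ξᶜ = 0 ∧ ∀ i, ∫ x, ψ i x ∂P ≤ γ i) ∧
      (∫ x, Q x ∂P) =
        sSup {r : ℝ | ∃ P' : Measure (EuclideanSpace ℝ (Fin d)),
          (IsProbabilityMeasure P' ∧ P' Ξᶜ = 0 ∧ ∀ i, ∫ x, ψ i x ∂P' ≤ γ i) ∧
          (∫ x, Q x ∂P') = r} := by
  have hms : MeasurableSet Ξ := hΞc.isClosed.measurableSet
  haveI : CompactSpace Ξ := isCompact_iff_compactSpace.1 hΞc
  have hemb := MeasurableEmbedding.subtype_coe hms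
  have hψ' : ∀ i, LowerSemicontinuous (fun μ : ProbabilityMeasure Ξ =>
      ∫ x : Ξ, ψ i x ∂(μ : Measure Ξ)) := by
    intro i
    obtain ⟨C, hC⟩ := hψb i
    exact WCEV_lsc_integral (fun x : Ξ => ψ i x) (lowerSemicontinuous_restrict_iff.2 (hψl i)) C
      (fun x => hC x x.2)
  have hQ' : UpperSemicontinuous (fun μ : ProbabilityMeasure Ξ =>
      ∫ x : Ξ, Q x ∂(μ : Measure Ξ)) := by
    obtain ⟨C, hC⟩ := hQb
    have hu : UpperSemicontinuous (fun x : Ξ => Q x) := upperSemicontinuousOn_iff_restrict.2 hQu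
    have hn : LowerSemicontinuous (fun x : Ξ => - Q x) := by
      intro x y hy
      change y < - Q x at hy
      filter_upwards [hu x (-y) (show Q x < -y by linarith)] with z hz
      change Q z < -y at hz
      change y < - Q z
      linarith
    have := WCEV_lsc_integral (fun x : Ξ => - Q x) hn C (fun x => by rw [abs_neg]; exact hC x x.2)
    intro μ y hy
    change ∫ x : Ξ, Q x ∂(μ : Measure Ξ) < y at hy
    filter_upwards [this μ (-y) (show -y < ∫ x : Ξ, - Q x ∂(μ : Measure Ξ) by
      rw [integral_neg]; linarith)] with ν hν
    change -y < ∫ x : Ξ, - Q x ∂(ν : Measure Ξ) at hν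
    rw [integral_neg] at hν
    change ∫ x : Ξ, Q x ∂(ν : Measure Ξ) < y
    linarith
  -- transfer from the subtype to the ambient space
  have hback : ∀ P : Measure (EuclideanSpace ℝ (Fin d)), IsProbabilityMeasure P → P Ξᶜ = 0 →
      ∃ μ : ProbabilityMeasure Ξ, (μ : Measure Ξ).map Subtype.val = P := by
    intro P hP h0
    have hmap : (P.comap (Subtype.val : Ξ → _)).map Subtype.val = P := by
      rw [map_comap_subtype_coe hms]
      exact Measure.restrict_eq_self_of_ae_mem (by rw [ae_iff]; exact h0)
    have hp : IsProbabilityMeasure (P.comap (Subtype.val : Ξ → _)) := by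
      constructor
      have h1 : P Set.univ = 1 := measure_univ
      rw [← hmap, hemb.map_apply] at h1
      simpa using h1
    exact ⟨⟨_, hp⟩, hmap⟩
  have hfor : ∀ μ : ProbabilityMeasure Ξ, ∀ f : EuclideanSpace ℝ (Fin d) → ℝ,
      ∫ x, f x ∂((μ : Measure Ξ).map Subtype.val) = ∫ x : Ξ, f x ∂(μ : Measure Ξ) :=
    fun μ f => hemb.integral_map f
  let S : Set (ProbabilityMeasure Ξ) := {μ | ∀ i, ∫ x : Ξ, ψ i x ∂(μ : Measure Ξ) ≤ γ i}
  have hSc : IsClosed S := by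
    have : S = ⋂ i, (fun μ : ProbabilityMeasure Ξ =>
        ∫ x : Ξ, ψ i x ∂(μ : Measure Ξ)) ⁻¹' Set.Iic (γ i) := by
      ext μ; simp [S]
    rw [this]
    exact isClosed_iInter fun i => (hψ' i).isClosed_preimage _
  have hSne : S.Nonempty := by
    obtain ⟨P, hP, h0, hle⟩ := hamb
    obtain ⟨μ, rfl⟩ := hback P hP h0
    exact ⟨μ, fun i => by rw [← hfor]; exact hle i⟩
  obtain ⟨μ, hμS, hμ⟩ := UpperSemicontinuousOn.exists_isMaxOn hSne hSc.isCompact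
    (hQ'.upperSemicontinuousOn S)
  have hfeas : IsProbabilityMeasure ((μ : Measure Ξ).map Subtype.val) ∧
      ((μ : Measure Ξ).map Subtype.val) Ξᶜ = 0 ∧
      ∀ i, ∫ x, ψ i x ∂((μ : Measure Ξ).map Subtype.val) ≤ γ i := by
    refine ⟨Measure.isProbabilityMeasure_map measurable_subtype_coe.aemeasurable, ?_, ?_⟩
    · rw [hemb.map_apply]; simp
    · intro i; rw [hfor]; exact hμS i
  refine ⟨_, hfeas, ?_⟩
  symm
  apply IsGreatest.csSup_eq
  refine ⟨⟨_, hfeas, rfl⟩, ?_⟩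
  rintro r ⟨P', ⟨hP', h0, hle⟩, rfl⟩
  obtain ⟨ν, rfl⟩ := hback P' hP' h0
  rw [hfor, hfor]
  exact hμ (show ν ∈ S from fun i => by rw [← hfor]; exact hle i)
end

section
/- Let Ξ be a nonempty compact metric space, let ψ_1, …, ψ_m : Ξ → ℝ be bounded and lower semicontinuous, and let γ_1, …, γ_m ∈ ℝ. Then the ambiguity set 𝒫 = {P a Borel probability measure on Ξ : ∫_Ξ ψ_i dP ≤ γ_i for all i ∈ {1,…,m}} is a compact subset of the space of Borel probability measures on Ξ equipped with the topology of weak convergence (convergence in distribution). -/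
open MeasureTheory Filter

/-- On a nonempty compact metric space `Ξ`, the ambiguity set defined
by bounded lower semicontinuous moment functions `ψ_i` and bounds `γ_i` is a compact
subset of the space of Borel probability measures on `Ξ` with the topology of weak
convergence. -/
theorem ambiguity_set_weakly_compact
    (Ξ : Type*) [MetricSpace Ξ] [CompactSpace Ξ] [Nonempty Ξ]
    [MeasurableSpace Ξ] [BorelSpace Ξ]
    (m : ℕ) (ψ : Fin m → Ξ → ℝ)
    (hψl : ∀ i, LowerSemicontinuous (ψ i))
    (hψb : ∀ i, ∃ C, ∀ x, |ψ i x| ≤ C)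
    (γ : Fin m → ℝ) :
    IsCompact {μ : ProbabilityMeasure Ξ | ∀ i, ∫ x, ψ i x ∂(μ : Measure Ξ) ≤ γ i} := by
  have hcl : IsClosed {μ : ProbabilityMeasure Ξ | ∀ i, ∫ x, ψ i x ∂(μ : Measure Ξ) ≤ γ i} := by
    apply IsSeqClosed.isClosed
    intro μs μ hμs hlim i
    obtain ⟨C, hC⟩ := hψb i
    have hmeas : Measurable (ψ i) := (hψl i).measurable
    have hnn : ∀ x, 0 ≤ ψ i x + C := fun x => by
      have := (abs_le.mp (hC x)).1
      linarith
    have hint : ∀ ν : ProbabilityMeasure Ξ, Integrable (ψ i) (ν : Measure Ξ) := fun ν =>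
      Integrable.of_bound hmeas.aestronglyMeasurable C
        (Eventually.of_forall fun x => by simpa using hC x)
    have hint2 : ∀ ν : ProbabilityMeasure Ξ,
        Integrable (fun x => ψ i x + C) (ν : Measure Ξ) := fun ν =>
      (hint ν).add (integrable_const C)
    have hval : ∀ ν : ProbabilityMeasure Ξ,
        ∫ x, (ψ i x + C) ∂(ν : Measure Ξ) = (∫ x, ψ i x ∂(ν : Measure Ξ)) + C := fun ν => by
      rw [integral_add (hint ν) (integrable_const C)]
      simp
    have hγ : 0 ≤ γ i + C := by
      have h1 : 0 ≤ ∫ x, (ψ i x + C) ∂(μs 0 : Measure Ξ) := integral_nonneg hnn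
      rw [hval] at h1
      have h2 := hμs 0 i
      linarith
    have key : ∫⁻ x, ENNReal.ofReal (ψ i x + C) ∂(μ : Measure Ξ) ≤
        atTop.liminf (fun n => ∫⁻ x, ENNReal.ofReal (ψ i x + C) ∂(μs n : Measure Ξ)) := by
      have hlc : ∀ ν : ProbabilityMeasure Ξ,
          ∫⁻ x, ENNReal.ofReal (ψ i x + C) ∂(ν : Measure Ξ) =
            ∫⁻ t in Set.Ioi (0 : ℝ), (ν : Measure Ξ) {a | t < ψ i a + C} := fun ν =>
        lintegral_eq_lintegral_meas_lt _ (Eventually.of_forall hnn)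
          (hmeas.add_const C).aemeasurable
      simp_rw [hlc]
      refine le_trans (lintegral_mono fun t => ?_)
        (lintegral_liminf_le fun n => Antitone.measurable fun s t hst =>
          measure_mono fun ω hω => lt_of_le_of_lt hst hω)
      refine ProbabilityMeasure.le_liminf_measure_open_of_tendsto hlim ?_
      have := (hψl i).isOpen_preimage (t - C)
      convert this using 1
      ext a
      simp [sub_lt_iff_lt_add]
    have hle : ∫⁻ x, ENNReal.ofReal (ψ i x + C) ∂(μ : Measure Ξ) ≤
        ENNReal.ofReal (γ i + C) := by
      refine key.trans (liminf_le_of_frequently_le' (Frequently.of_forall fun n => ?_))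
      rw [← ofReal_integral_eq_lintegral_ofReal (hint2 _) (Eventually.of_forall hnn), hval]
      exact ENNReal.ofReal_le_ofReal (by have := hμs n i; linarith)
    rw [← ofReal_integral_eq_lintegral_ofReal (hint2 _) (Eventually.of_forall hnn), hval,
      ENNReal.ofReal_le_ofReal_iff hγ] at hle
    linarith
  exact hcl.isCompact
end

section
/- Let Ξ be a nonempty compact subset of ℝ^d, let Q : Ξ → ℝ be bounded and upper semicontinuous, let ψ_1, …, ψ_m : Ξ → ℝ be bounded and lower semicontinuous, let γ_1, …, γ_m ∈ ℝ, and let 𝒫 be the associated ambiguity set. For t ∈ ℝ define g(t) = sup { ∫_Ξ Q dP : P a Borel probability measure on Ξ with ∫_Ξ ψ_i dP ≤ γ_i − t for all i }. Assume there exists Δ > 0 such that for every t ∈ [0, Δ] the set { P : ∫_Ξ ψ_i dP ≤ γ_i − t for all i } is nonempty, and assume g is continuous at t = 0. Then there exists a sequence of finitely supported probability measures ∑_{j} p_j(k) δ_{ξ_j(k)} each belonging to 𝒫 (i.e. ∑_j p_j(k) ψ_i(ξ_j(k)) ≤ γ_i for all i) such that ∑_j p_j(k) Q(ξ_j(k))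 → sup_{P ∈ 𝒫} ∫_Ξ Q dP as k → ∞. -/
open MeasureTheory Filter

/-- Integrals of finitely many bounded functions are simultaneously approximated by
finitely supported probability measures. -/
theorem approx_by_discrete {E ι : Type*} [MeasurableSpace E] [Fintype ι] (S : Set E)
    (P : Measure E) [IsProbabilityMeasure P] (hP : P Sᶜ = 0) (F : ι → E → ℝ)
    (hF : ∀ i, Integrable (F i) P) (ε : ℝ) (hε : 0 < ε) :
    ∃ (k : ℕ) (ξ : Fin k → E) (p : Fin k → ℝ), (∀ j, ξ j ∈ S) ∧ (∀ j, 0 ≤ p j) ∧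
      ∑ j, p j = 1 ∧ ∀ i, |∑ j, p j * F i (ξ j) - ∫ x, F i x ∂P| < ε := by
  let G : E → ι → ℝ := fun x i => F i x
  have hG : Integrable G P := Integrable.of_eval hF
  have hS : ∀ᵐ x ∂P, x ∈ S := hP
  have hmem : (∫ x, G x ∂P) ∈ closure (convexHull ℝ (Set.image G S)) := by
    refine (convex_convexHull ℝ _).closure.integral_mem isClosed_closure ?_ hG
    filter_upwards [hS] with x hx
    exact subset_closure (subset_convexHull ℝ _ ⟨x, hx, rfl⟩)
  obtain ⟨y, hy, hd⟩ := Metric.mem_closure_iff.1 hmem ε hε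
  obtain ⟨κ, _, w, z, hw0, hw1, hz, rfl⟩ := mem_convexHull_iff_exists_fintype.1 hy
  choose x hxS hxz using hz
  let e := (Fintype.equivFin κ).symm
  refine ⟨Fintype.card κ, fun j => x (e j), fun j => w (e j), fun j => hxS _, fun j => hw0 _,
    ?_, fun i => ?_⟩
  · rw [← hw1]
    exact e.sum_comp w
  · have h1 := (dist_le_pi_dist (∫ x, G x ∂P) (∑ i, w i • z i) i).trans_lt hd
    rw [dist_comm, Real.dist_eq, eval_integral hF] at h1
    rw [e.sum_comp (fun j => w j * F i (x j))]
    have h2 : (∑ i, w i • z i) i = ∑ j, w j * F i (x j) := by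
      rw [Finset.sum_apply]
      refine Finset.sum_congr rfl fun j _ => ?_
      rw [← hxz j]
      rfl
    rwa [h2] at h1

/-- Under upper semicontinuity of `Q`, lower semicontinuity of the
`ψ_i`, a Slater-type condition (the tightened ambiguity set is nonempty for all
`t ∈ [0, Δ]`) and continuity at `0` of the perturbed value function `g`, there is a
sequence of finitely supported probability distributions, each belonging to the
ambiguity set, whose weighted sums of `Q`-values converge to the worst-case expected
value. -/
theorem discrete_sequence_converging_to_WCEV
    (d m : ℕ) (Ξ : Set (EuclideanSpace ℝ (Fin d)))
    (hΞne : Ξ.Nonempty) (hΞc : IsCompact Ξ)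
    (Q : EuclideanSpace ℝ (Fin d) → ℝ)
    (hQu : UpperSemicontinuousOn Q Ξ) (hQb : ∃ C, ∀ x ∈ Ξ, |Q x| ≤ C)
    (ψ : Fin m → EuclideanSpace ℝ (Fin d) → ℝ)
    (hψl : ∀ i, LowerSemicontinuousOn (ψ i) Ξ)
    (hψb : ∀ i, ∃ C, ∀ x ∈ Ξ, |ψ i x| ≤ C)
    (γ : Fin m → ℝ)
    (hSlater : ∃ Δ : ℝ, 0 < Δ ∧ ∀ t ∈ Set.Icc (0 : ℝ) Δ,
      ∃ P : Measure (EuclideanSpace ℝ (Fin d)),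
        IsProbabilityMeasure P ∧ P Ξᶜ = 0 ∧ ∀ i, ∫ x, ψ i x ∂P ≤ γ i - t)
    (hg : ContinuousAt (fun t : ℝ =>
      sSup {r : ℝ | ∃ P : Measure (EuclideanSpace ℝ (Fin d)),
        (IsProbabilityMeasure P ∧ P Ξᶜ = 0 ∧ ∀ i, ∫ x, ψ i x ∂P ≤ γ i - t) ∧
        (∫ x, Q x ∂P) = r}) 0) :
    ∃ (k : ℕ → ℕ) (ξ : (n : ℕ) → Fin (k n) → EuclideanSpace ℝ (Fin d))
      (p : (n : ℕ) → Fin (k n) → ℝ),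
      (∀ n j, ξ n j ∈ Ξ) ∧ (∀ n j, 0 ≤ p n j) ∧ (∀ n, ∑ j, p n j = 1) ∧
      (∀ n i, ∑ j, p n j * ψ i (ξ n j) ≤ γ i) ∧
      Tendsto (fun n => ∑ j, p n j * Q (ξ n j)) atTop
        (nhds (sSup {r : ℝ | ∃ P : Measure (EuclideanSpace ℝ (Fin d)),
          (IsProbabilityMeasure P ∧ P Ξᶜ = 0 ∧ ∀ i, ∫ x, ψ i x ∂P ≤ γ i) ∧
          (∫ x, Q x ∂P) = r})) := by
  have hmeas : MeasurableSet Ξ := hΞc.measurableSet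
  have key : ∀ f : EuclideanSpace ℝ (Fin d) → ℝ, (Measurable fun x : Ξ => f x) →
      (∃ C, ∀ x ∈ Ξ, |f x| ≤ C) → ∀ P : Measure (EuclideanSpace ℝ (Fin d)),
      IsProbabilityMeasure P → P Ξᶜ = 0 → Integrable f P := by
    intro f hf ⟨C, hC⟩ P _ hP
    have hS : ∀ᵐ x ∂P, x ∈ Ξ := hP
    have h1 := aemeasurable_restrict_of_measurable_subtype (μ := P) hmeas hf
    rw [Measure.restrict_eq_self_of_ae_mem hS] at h1
    refine Integrable.of_bound h1.aestronglyMeasurable C ?_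
    filter_upwards [hS] with x hx
    exact hC x hx
  have hQi := key Q (upperSemicontinuousOn_iff_restrict.2 hQu).measurable hQb
  have hψi := fun i => key (ψ i) (lowerSemicontinuous_restrict_iff.2 (hψl i)).measurable (hψb i)
  obtain ⟨C, hC⟩ := hQb
  obtain ⟨Δ, hΔ, hSl⟩ := hSlater
  set g : ℝ → ℝ := fun t : ℝ =>
      sSup {r : ℝ | ∃ P : Measure (EuclideanSpace ℝ (Fin d)),
        (IsProbabilityMeasure P ∧ P Ξᶜ = 0 ∧ ∀ i, ∫ x, ψ i x ∂P ≤ γ i - t) ∧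
        (∫ x, Q x ∂P) = r} with hgdef
  have hg0 : sSup {r : ℝ | ∃ P : Measure (EuclideanSpace ℝ (Fin d)),
          (IsProbabilityMeasure P ∧ P Ξᶜ = 0 ∧ ∀ i, ∫ x, ψ i x ∂P ≤ γ i) ∧
          (∫ x, Q x ∂P) = r} = g 0 := by
    simp only [hgdef, sub_zero]
  rw [hg0]
  have step : ∀ n : ℕ, ∃ (k : ℕ) (ξ : Fin k → EuclideanSpace ℝ (Fin d)) (p : Fin k → ℝ),
      (∀ j, ξ j ∈ Ξ) ∧ (∀ j, 0 ≤ p j) ∧ ∑ j, p j = 1 ∧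
      (∀ i, ∑ j, p j * ψ i (ξ j) ≤ γ i) ∧
      dist (∑ j, p j * Q (ξ j)) (g 0) ≤ 3 * (1 / ((n : ℝ) + 1)) := by
    intro n
    set ε : ℝ := 1 / ((n : ℝ) + 1)
    have hε : 0 < ε := by positivity
    obtain ⟨δ, hδ, hδg⟩ := Metric.continuousAt_iff.1 hg ε hε
    set t := min Δ (δ / 2) with ht
    have ht0 : 0 < t := lt_min hΔ (by positivity)
    have htΔ : t ≤ Δ := min_le_left _ _
    have htδ : t < δ := (min_le_right _ _).trans_lt (by linarith)
    have hgt : dist (g t) (g 0) < ε := hδg (by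
      rw [Real.dist_eq, sub_zero, abs_of_pos ht0]; exact htδ)
    rw [Real.dist_eq, abs_lt] at hgt
    obtain ⟨P₀, hP₀⟩ := hSl t ⟨ht0.le, htΔ⟩
    have hbdd : BddAbove {r : ℝ | ∃ P : Measure (EuclideanSpace ℝ (Fin d)),
        (IsProbabilityMeasure P ∧ P Ξᶜ = 0 ∧ ∀ i, ∫ x, ψ i x ∂P ≤ γ i - t) ∧
        (∫ x, Q x ∂P) = r} := by
      refine ⟨C, ?_⟩
      rintro r ⟨P, ⟨hp, hPS, -⟩, rfl⟩
      have hS : ∀ᵐ x ∂P, x ∈ Ξ := hPS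
      calc ∫ x, Q x ∂P ≤ ∫ _, C ∂P := by
            refine integral_mono_ae (hQi P hp hPS) (integrable_const C) ?_
            filter_upwards [hS] with x hx
            exact (le_abs_self _).trans (hC x hx)
        _ = C := by simp
    obtain ⟨r, ⟨P, hPf, hPr⟩, hr⟩ := exists_lt_of_lt_csSup
      (s := {r : ℝ | ∃ P : Measure (EuclideanSpace ℝ (Fin d)),
        (IsProbabilityMeasure P ∧ P Ξᶜ = 0 ∧ ∀ i, ∫ x, ψ i x ∂P ≤ γ i - t) ∧
        (∫ x, Q x ∂P) = r}) ⟨_, P₀, hP₀, rfl⟩ (show g t - ε < g t by linarith)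
    have hle : r ≤ g t := le_csSup hbdd ⟨P, hPf, hPr⟩
    obtain ⟨hp, hPS, hPψ⟩ := hPf
    obtain ⟨k, ξ, p, h1, h2, h3, h4⟩ := approx_by_discrete Ξ P hPS
      (fun o : Option (Fin m) => o.elim Q ψ)
      (by rintro (_ | i); exacts [hQi P hp hPS, hψi i P hp hPS]) (min t ε) (lt_min ht0 hε)
    refine ⟨k, ξ, p, h1, h2, h3, fun i => ?_, ?_⟩
    · have := h4 (some i)
      simp only [Option.elim] at this
      have := (abs_lt.1 this).2
      linarith [hPψ i, min_le_left t ε]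
    · have := h4 none
      simp only [Option.elim] at this
      have := abs_lt.1 this
      rw [Real.dist_eq, abs_le]
      constructor <;> linarith [min_le_right t ε]
  choose k ξ p h1 h2 h3 h4 h5 using step
  refine ⟨k, ξ, p, h1, h2, h3, h4, ?_⟩
  rw [tendsto_iff_dist_tendsto_zero]
  refine squeeze_zero (fun _ => dist_nonneg) h5 ?_
  simpa using (tendsto_one_div_add_atTop_nhds_zero_nat (𝕜 := ℝ)).const_mul 3
end

section
/- Let Ξ be a nonempty compact subset of ℝ^d, let Q : Ξ → ℝ be bounded and upper semicontinuous, let ψ_1, …, ψ_m : Ξ → ℝ be bounded and lower semicontinuous, let γ_1, …, γ_m ∈ ℝ, and let 𝒫 be the associated ambiguity set. Assume there exists Δ > 0 such that for every t ∈ [0, Δ] the set { P : ∫_Ξ ψ_i dP ≤ γ_i − t for all i } is nonempty, and assume the function g(t) = sup { ∫_Ξ Q dP : ∫_Ξ ψ_i dP ≤ γ_i − t for all i } is continuous at t = 0. Then sup_{P ∈ 𝒫} ∫_Ξ Q dP equals the supremum of ∑_{j=1}^n p_j Q(ξ_j) over all n ≥ 1, all ξ_1, …, ξ_n ∈ Ξ,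 and all p_1, …, p_n ≥ 0 with ∑_j p_j = 1 and ∑_j p_j ψ_i(ξ_j) ≤ γ_i for every i; i.e. the worst-case expected value over 𝒫 equals the worst-case expected value over the finitely supported members of 𝒫. -/
open MeasureTheory Filter

lemma wcev_integrable_aux {d : ℕ} {Ξ : Set (EuclideanSpace ℝ (Fin d))} (hΞc : IsCompact Ξ)
    {f : EuclideanSpace ℝ (Fin d) → ℝ} (hf : LowerSemicontinuousOn f Ξ)
    (hb : ∃ C, ∀ x ∈ Ξ, |f x| ≤ C) (P : Measure (EuclideanSpace ℝ (Fin d)))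
    [IsProbabilityMeasure P] (hP : P Ξᶜ = 0) : Integrable f P := by
  obtain ⟨C, hC⟩ := hb
  have hae : ∀ᵐ x ∂P, x ∈ Ξ := hP
  have h1 : LowerSemicontinuous (fun x : Ξ => f x) := by
    intro x y hy
    have := hf x x.2 y hy
    rw [nhdsWithin_eq_map_subtype_coe x.2] at this
    exact this
  have h2 : AEMeasurable f (P.restrict Ξ) :=
    aemeasurable_restrict_of_measurable_subtype hΞc.measurableSet h1.measurable
  rw [Measure.restrict_eq_self_of_ae_mem hae] at h2
  refine Integrable.of_bound h2.aestronglyMeasurable C ?_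
  filter_upwards [hae] with x hx
  exact hC x hx

lemma wcev_approx_aux {d m : ℕ} {Ξ : Set (EuclideanSpace ℝ (Fin d))}
    {Q : EuclideanSpace ℝ (Fin d) → ℝ} {ψ : Fin m → EuclideanSpace ℝ (Fin d) → ℝ}
    (P : Measure (EuclideanSpace ℝ (Fin d)))
    [IsProbabilityMeasure P] (hP : P Ξᶜ = 0) (hQ : Integrable Q P)
    (hψ : ∀ i, Integrable (ψ i) P) {ε : ℝ} (hε : 0 < ε) :
    ∃ (n : ℕ) (ξ : Fin n → EuclideanSpace ℝ (Fin d)) (p : Fin n → ℝ),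
        (∀ j, ξ j ∈ Ξ) ∧ (∀ j, 0 ≤ p j) ∧ (∑ j, p j = 1) ∧
        (∀ i, ∑ j, p j * ψ i (ξ j) ≤ ∫ x, ψ i x ∂P + ε) ∧
        (∫ x, Q x ∂P) ≤ (∑ j, p j * Q (ξ j)) + ε := by
  let F : EuclideanSpace ℝ (Fin d) → (Option (Fin m) → ℝ) :=
    fun x o => o.elim (Q x) (fun i => ψ i x)
  have hF : ∀ o, Integrable (fun x => F x o) P := by
    rintro (_ | i)
    · exact hQ
    · exact hψ i
  have hFi : Integrable F P := Integrable.of_eval hF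
  have hmem : ∫ x, F x ∂P ∈ closure (convexHull ℝ (F '' Ξ)) := by
    refine Convex.integral_mem (convex_convexHull ℝ _).closure isClosed_closure ?_ hFi
    have hae : ∀ᵐ x ∂P, x ∈ Ξ := hP
    filter_upwards [hae] with x hx
    exact subset_closure (subset_convexHull ℝ _ ⟨x, hx, rfl⟩)
  obtain ⟨b, hb, hd⟩ := Metric.mem_closure_iff.1 hmem ε hε
  obtain ⟨ι, _, w, z, hw0, hw1, hz, hs⟩ := mem_convexHull_iff_exists_fintype.1 hb
  choose y hy hyz using hz
  let e := (Fintype.equivFin ι).symm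
  have hsum : ∀ o, ∑ j, w (e j) * F (y (e j)) o = b o := by
    intro o
    rw [Equiv.sum_comp e (fun k => w k * F (y k) o), ← hs]
    simp [hyz]
  have hdist : ∀ o, |∫ x, F x o ∂P - b o| < ε := by
    intro o
    rw [← eval_integral hF o]
    exact (dist_le_pi_dist (∫ x, F x ∂P) b o).trans_lt hd
  refine ⟨_, fun j => y (e j), fun j => w (e j), fun j => hy _, fun j => hw0 _, ?_, ?_, ?_⟩
  · rw [Equiv.sum_comp e w, hw1]
  · intro i
    have h1 := abs_lt.1 (hdist (some i))
    have h2 := hsum (some i)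
    simp only [F, Option.elim] at h1 h2
    linarith
  · have h1 := abs_lt.1 (hdist none)
    have h2 := hsum none
    simp only [F, Option.elim] at h1 h2
    linarith

/-- Under the hypotheses of Theorem 2 (Slater-type condition and
continuity of the perturbed value function `g` at `0`), the worst-case expected value
over the ambiguity set equals the supremum of the worst-case expected values over its
finitely supported members. -/
theorem WCEV_eq_discrete_WCEV
    (d m : ℕ) (Ξ : Set (EuclideanSpace ℝ (Fin d)))
    (hΞne : Ξ.Nonempty) (hΞc : IsCompact Ξ)
    (Q : EuclideanSpace ℝ (Fin d) → ℝ)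
    (hQu : UpperSemicontinuousOn Q Ξ) (hQb : ∃ C, ∀ x ∈ Ξ, |Q x| ≤ C)
    (ψ : Fin m → EuclideanSpace ℝ (Fin d) → ℝ)
    (hψl : ∀ i, LowerSemicontinuousOn (ψ i) Ξ)
    (hψb : ∀ i, ∃ C, ∀ x ∈ Ξ, |ψ i x| ≤ C)
    (γ : Fin m → ℝ)
    (hSlater : ∃ Δ : ℝ, 0 < Δ ∧ ∀ t ∈ Set.Icc (0 : ℝ) Δ,
      ∃ P : Measure (EuclideanSpace ℝ (Fin d)),
        IsProbabilityMeasure P ∧ P Ξᶜ = 0 ∧ ∀ i, ∫ x, ψ i x ∂P ≤ γ i - t)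
    (hg : ContinuousAt (fun t : ℝ =>
      sSup {r : ℝ | ∃ P : Measure (EuclideanSpace ℝ (Fin d)),
        (IsProbabilityMeasure P ∧ P Ξᶜ = 0 ∧ ∀ i, ∫ x, ψ i x ∂P ≤ γ i - t) ∧
        (∫ x, Q x ∂P) = r}) 0) :
    sSup {r : ℝ | ∃ P : Measure (EuclideanSpace ℝ (Fin d)),
        (IsProbabilityMeasure P ∧ P Ξᶜ = 0 ∧ ∀ i, ∫ x, ψ i x ∂P ≤ γ i) ∧
        (∫ x, Q x ∂P) = r} =
      sSup {r : ℝ | ∃ (n : ℕ) (ξ : Fin n → EuclideanSpace ℝ (Fin d)) (p : Fin n → ℝ),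
        (∀ j, ξ j ∈ Ξ) ∧ (∀ j, 0 ≤ p j) ∧ (∑ j, p j = 1) ∧
        (∀ i, ∑ j, p j * ψ i (ξ j) ≤ γ i) ∧
        (∑ j, p j * Q (ξ j)) = r} := by
  have hψi := fun i (P : Measure (EuclideanSpace ℝ (Fin d))) (_ : IsProbabilityMeasure P)
    (hP : P Ξᶜ = 0) => wcev_integrable_aux hΞc (hψl i) (hψb i) P hP
  have hQi : ∀ P : Measure (EuclideanSpace ℝ (Fin d)), IsProbabilityMeasure P → P Ξᶜ = 0 →
      Integrable Q P := by
    intro P _ hP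
    have hl : LowerSemicontinuousOn (fun x => - Q x) Ξ := by
      intro x hx y hy
      filter_upwards [hQu x hx (-y) (by linarith)] with z hz
      linarith
    have := wcev_integrable_aux hΞc hl (by simpa using hQb) P hP
    simpa using this.neg
  obtain ⟨C, hC⟩ := hQb
  obtain ⟨Δ, hΔ, hS⟩ := hSlater
  set D := {r : ℝ | ∃ (n : ℕ) (ξ : Fin n → EuclideanSpace ℝ (Fin d)) (p : Fin n → ℝ),
        (∀ j, ξ j ∈ Ξ) ∧ (∀ j, 0 ≤ p j) ∧ (∑ j, p j = 1) ∧
        (∀ i, ∑ j, p j * ψ i (ξ j) ≤ γ i) ∧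
        (∑ j, p j * Q (ξ j)) = r} with hD
  have hDb : BddAbove D := by
    refine ⟨C, ?_⟩
    rintro r ⟨n, ξ, p, hξ, hp, hp1, -, rfl⟩
    calc ∑ j, p j * Q (ξ j) ≤ ∑ j, p j * C :=
          Finset.sum_le_sum fun j _ =>
            mul_le_mul_of_nonneg_left ((le_abs_self _).trans (hC _ (hξ j))) (hp j)
      _ = C := by rw [← Finset.sum_mul, hp1, one_mul]
  -- approximation step
  have key : ∀ t, 0 < t → ∀ P : Measure (EuclideanSpace ℝ (Fin d)), IsProbabilityMeasure P →
      P Ξᶜ = 0 → (∀ i, ∫ x, ψ i x ∂P ≤ γ i - t) → ∀ ε, 0 < ε →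
      ∃ r ∈ D, ∫ x, Q x ∂P ≤ r + ε := by
    intro t ht P hPp hP hc ε hε
    obtain ⟨n, ξ, p, hξ, hp, hp1, h1, h2⟩ := wcev_approx_aux P hP (hQi P hPp hP)
      (fun i => hψi i P hPp hP) (lt_min ht hε)
    refine ⟨_, ⟨n, ξ, p, hξ, hp, hp1, fun i => ?_, rfl⟩, ?_⟩
    · have := h1 i
      have := hc i
      have := min_le_left t ε
      linarith
    · have := min_le_right t ε
      linarith
  have hDne : D.Nonempty := by
    obtain ⟨P, hPp, hP, hc⟩ := hS Δ ⟨hΔ.le, le_rfl⟩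
    obtain ⟨r, hr, -⟩ := key Δ hΔ P hPp hP hc 1 one_pos
    exact ⟨r, hr⟩
  apply le_antisymm
  · have hlim := hg.tendsto.mono_left (nhdsWithin_le_nhds (s := Set.Ioi 0))
    simp only [sub_zero] at hlim
    refine le_of_tendsto hlim ?_
    filter_upwards [Ioc_mem_nhdsGT hΔ] with t ht
    apply csSup_le
    · obtain ⟨P, hP⟩ := hS t ⟨ht.1.le, ht.2⟩
      exact ⟨_, P, hP, rfl⟩
    · rintro r ⟨P, ⟨hPp, hP, hc⟩, rfl⟩
      refine le_of_forall_pos_le_add fun ε hε => ?_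
      obtain ⟨r, hr, hle⟩ := key t ht.1 P hPp hP hc ε hε
      have := le_csSup hDb hr
      linarith
  · apply csSup_le_csSup
    · refine ⟨C, ?_⟩
      rintro r ⟨P, ⟨hPp, hP, -⟩, rfl⟩
      have hae : ∀ᵐ x ∂P, x ∈ Ξ := hP
      calc ∫ x, Q x ∂P ≤ ∫ _, C ∂P := by
            refine integral_mono_ae (hQi P hPp hP) (integrable_const C) ?_
            filter_upwards [hae] with x hx
            exact (le_abs_self _).trans (hC _ hx)
        _ = C := by simp
    · exact hDne
    · rintro r ⟨n, ξ, p, hξ, hp, hp1, hc, rfl⟩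
      have hint : ∀ f : EuclideanSpace ℝ (Fin d) → ℝ,
          ∫ x, f x ∂(∑ j, ENNReal.ofReal (p j) • Measure.dirac (ξ j)) =
            ∑ j, p j * f (ξ j) := by
        intro f
        rw [integral_finset_sum_measure]
        · refine Finset.sum_congr rfl fun j _ => ?_
          rw [integral_smul_measure, integral_dirac, ENNReal.toReal_ofReal (hp j), smul_eq_mul]
        · intro j _
          exact (integrable_dirac (by simp)).smul_measure ENNReal.ofReal_ne_top
      refine ⟨∑ j, ENNReal.ofReal (p j) • Measure.dirac (ξ j), ⟨⟨?_⟩, ?_, ?_⟩, hint Q⟩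
      · simp [← ENNReal.ofReal_sum_of_nonneg (fun j _ => hp j), hp1]
      · simp [Measure.dirac_apply' _ hΞc.measurableSet.compl, hξ]
      · intro i
        rw [hint]
        exact hc i
end

section
/- Let Ξ be a nonempty compact subset of ℝ^d, let Q : Ξ → ℝ be bounded and upper semicontinuous, let ψ_1, …, ψ_m : Ξ → ℝ be continuous, let γ_1, …, γ_m ∈ ℝ, and suppose the ambiguity set 𝒫 is nonempty. Then the worst-case expected value is attained by a distribution supported on at most m+1 points: there exist ξ_1, …, ξ_{m+1} ∈ Ξ and p_1, …, p_{m+1} ≥ 0 with ∑_{j=1}^{m+1} p_j = 1, ∑_{j=1}^{m+1} p_j ψ_i(ξ_j) ≤ γ_i for every i ∈ {1,…,m}, and ∑_{j=1}^{m+1} p_j Q(ξ_j) = sup_{P ∈ 𝒫} ∫_Ξ Q dP. -/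
open MeasureTheory Filter

/-- Padding a finite weighted family to one indexed by `Fin N`. -/
theorem wcev_pad {ι E : Type*} [Fintype ι] {N : ℕ} (hN : Fintype.card ι ≤ N) {S : Set E}
    (hS : S.Nonempty) (z : ι → E) (hz : ∀ i, z i ∈ S) (w : ι → ℝ) (hw : ∀ i, 0 ≤ w i) :
    ∃ (z' : Fin N → E) (w' : Fin N → ℝ), (∀ j, z' j ∈ S) ∧ (∀ j, 0 ≤ w' j) ∧
      (∑ j, w' j = ∑ i, w i) ∧
      (∀ (F : Type) [AddCommGroup F] [Module ℝ F] (f : E → F),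
        ∑ j, w' j • f (z' j) = ∑ i, w i • f (z i)) := by
  classical
  obtain ⟨s0, hs0⟩ := hS
  obtain ⟨e⟩ : Nonempty (ι ↪ Fin N) :=
    Function.Embedding.nonempty_of_card_le (by simpa using hN)
  have he := e.injective
  refine ⟨Function.extend e z (fun _ => s0), Function.extend e w (fun _ => 0), ?_, ?_, ?_, ?_⟩
  · intro j
    by_cases h : ∃ i, e i = j
    · obtain ⟨i, rfl⟩ := h
      rw [he.extend_apply]; exact hz i
    · rw [Function.extend_apply' _ _ _ h]; exact hs0
  · intro j
    by_cases h : ∃ i, e i = j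
    · obtain ⟨i, rfl⟩ := h
      rw [he.extend_apply]; exact hw i
    · rw [Function.extend_apply' _ _ _ h]
  · symm
    refine Fintype.sum_of_injective e he _ _ ?_ ?_
    · intro j hj
      rw [Function.extend_apply' _ _ _ (by simpa using hj)]
    · intro i
      rw [he.extend_apply]
  · intro F _ _ f
    symm
    refine Fintype.sum_of_injective e he _ _ ?_ ?_
    · intro j hj
      rw [Function.extend_apply' w _ _ (by simpa using hj), zero_smul]
    · intro i
      rw [he.extend_apply, he.extend_apply]

/-- The convex hull of a compact set in finite dimension is compact. -/
theorem wcev_compact_hull {E : Type} [NormedAddCommGroup E] [NormedSpace ℝ E]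
    [FiniteDimensional ℝ E] {S : Set E} (hS : IsCompact S) (hne : S.Nonempty) :
    IsCompact (convexHull ℝ S) := by
  set N := Module.finrank ℝ E + 1 with hN
  have key : convexHull ℝ S = (fun q : (Fin N → ℝ) × (Fin N → E) => ∑ j, q.1 j • q.2 j) ''
      (stdSimplex ℝ (Fin N) ×ˢ Set.pi Set.univ (fun _ => S)) := by
    apply Set.Subset.antisymm
    · intro x hx
      obtain ⟨ι, _, z, w, hz, hai, hw, hw1, hx⟩ := eq_pos_convex_span_of_mem_convexHull hx
      have hc : Fintype.card ι ≤ N :=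
        hai.card_le_finrank_succ.trans (Nat.succ_le_succ (Submodule.finrank_le _))
      obtain ⟨z', w', h1, h2, h3, h4⟩ := wcev_pad hc hne z (fun i => hz ⟨i, rfl⟩) w
        (fun i => (hw i).le)
      refine ⟨(w', z'), ⟨⟨h2, h3.trans hw1⟩, fun j _ => h1 j⟩, ?_⟩
      exact (h4 E id).trans hx
    · rintro _ ⟨⟨w, z⟩, ⟨⟨h1, h2⟩, h3⟩, rfl⟩
      exact (convex_convexHull ℝ S).sum_mem (fun i _ => h1 i) h2
        (fun i _ => subset_convexHull ℝ S (h3 i trivial))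
  rw [key]
  refine ((isCompact_stdSimplex ℝ (Fin N)).prod (isCompact_univ_pi fun _ => hS)).image ?_
  fun_prop

/-- A boundary point (in a given direction) of a convex hull needs one point less. -/
theorem wcev_boundary {E : Type} [NormedAddCommGroup E] [NormedSpace ℝ E]
    [FiniteDimensional ℝ E] {S : Set E} (hne : S.Nonempty) {x v : E}
    {n : ℕ} (hn : Module.finrank ℝ E = n)
    (hx : x ∈ convexHull ℝ S) (hv : ∀ ε : ℝ, 0 < ε → x + ε • v ∉ convexHull ℝ S) :
    ∃ (z : Fin n → E) (w : Fin n → ℝ),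
      (∀ j, z j ∈ S) ∧ (∀ j, 0 ≤ w j) ∧ ∑ j, w j = 1 ∧ ∑ j, w j • z j = x := by
  subst hn
  obtain ⟨ι, _, z, w, hz, hai, hw, hw1, hxz⟩ := eq_pos_convex_span_of_mem_convexHull hx
  have hc : Fintype.card ι ≤ Module.finrank ℝ E + 1 :=
    hai.card_le_finrank_succ.trans (Nat.succ_le_succ (Submodule.finrank_le _))
  rcases hc.lt_or_eq with hc | hc
  · obtain ⟨z', w', h1, h2, h3, h4⟩ := wcev_pad (Nat.lt_succ_iff.mp hc) hne z
      (fun i => hz ⟨i, rfl⟩) w (fun i => (hw i).le)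
    exact ⟨z', w', h1, h2, h3.trans hw1, (h4 E id).trans hxz⟩
  · exfalso
    let b : AffineBasis ι ℝ E :=
      ⟨z, hai, hai.affineSpan_eq_top_iff_card_eq_finrank_add_one.mpr hc⟩
    have hxi : x ∈ interior (convexHull ℝ (Set.range b)) := by
      rw [b.interior_convexHull]
      intro i
      have hxc : x = Finset.univ.affineCombination ℝ b w := by
        rw [Finset.affineCombination_eq_linear_combination _ _ _ hw1]
        exact hxz.symm
      rw [hxc, b.coord_apply_combination_of_mem (Finset.mem_univ i) hw1]
      exact hw i
    have hcont : Tendsto (fun ε : ℝ => x + ε • v) (nhdsWithin 0 (Set.Ioi 0)) (nhds x) := by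
      have : Continuous (fun ε : ℝ => x + ε • v) := by fun_prop
      have h := this.tendsto 0
      simp only [zero_smul, add_zero] at h
      exact h.mono_left nhdsWithin_le_nhds
    have hev := (hcont.eventually (isOpen_interior.mem_nhds hxi)).and self_mem_nhdsWithin
    obtain ⟨ε, hε1, hε2⟩ := hev.exists
    exact hv ε hε2 (convexHull_mono hz (interior_subset hε1))

/-- (Richter–Rogosinski-type result.) If `Q` is bounded and upper
semicontinuous on the nonempty compact set `Ξ`, the `ψ_i` are continuous on `Ξ` and the
ambiguity set is nonempty, then the worst-case expected value is attained by a
distribution supported on at most `m + 1` points. -/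
theorem WCEV_attained_by_m_plus_one_points
    (d m : ℕ) (Ξ : Set (EuclideanSpace ℝ (Fin d)))
    (hΞne : Ξ.Nonempty) (hΞc : IsCompact Ξ)
    (Q : EuclideanSpace ℝ (Fin d) → ℝ)
    (hQu : UpperSemicontinuousOn Q Ξ) (hQb : ∃ C, ∀ x ∈ Ξ, |Q x| ≤ C)
    (ψ : Fin m → EuclideanSpace ℝ (Fin d) → ℝ)
    (hψc : ∀ i, ContinuousOn (ψ i) Ξ)
    (γ : Fin m → ℝ)
    (hamb : ∃ P : Measure (EuclideanSpace ℝ (Fin d)),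
      IsProbabilityMeasure P ∧ P Ξᶜ = 0 ∧ ∀ i, ∫ x, ψ i x ∂P ≤ γ i) :
    ∃ (ξ : Fin (m + 1) → EuclideanSpace ℝ (Fin d)) (p : Fin (m + 1) → ℝ),
      (∀ j, ξ j ∈ Ξ) ∧ (∀ j, 0 ≤ p j) ∧ (∑ j, p j = 1) ∧
      (∀ i, ∑ j, p j * ψ i (ξ j) ≤ γ i) ∧
      (∑ j, p j * Q (ξ j)) =
        sSup {r : ℝ | ∃ P : Measure (EuclideanSpace ℝ (Fin d)),
          (IsProbabilityMeasure P ∧ P Ξᶜ = 0 ∧ ∀ i, ∫ x, ψ i x ∂P ≤ γ i) ∧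
          (∫ x, Q x ∂P) = r} := by
  obtain ⟨C, hC⟩ := hQb
  have hΞm : MeasurableSet Ξ := hΞc.isClosed.measurableSet
  -- the compact truncated hypograph
  let K : Set (EuclideanSpace ℝ (Fin d) × ℝ) :=
    (Ξ ×ˢ Set.Icc (-C) C) ∩ {q | q.1 ∈ Ξ ∧ q.2 ≤ Q q.1}
  have hK : IsCompact K := (hΞc.prod isCompact_Icc).inter_right
    ((upperSemicontinuousOn_iff_isClosed_hypograph hΞc.isClosed).mp hQu)
  let G : EuclideanSpace ℝ (Fin d) × ℝ → (Fin m → ℝ) × ℝ := fun q => (fun i => ψ i q.1, q.2)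
  have hG : ContinuousOn G K := by
    refine ContinuousOn.prodMk (continuousOn_pi.mpr fun i => ?_) continuousOn_snd
    exact (hψc i).comp continuousOn_fst (fun q hq => hq.1.1)
  let H := G '' K
  have hH : IsCompact H := hK.image_of_continuousOn hG
  have hQmem : ∀ x ∈ Ξ, G (x, Q x) ∈ H := fun x hx =>
    ⟨(x, Q x), ⟨⟨hx, abs_le.mp (hC x hx)⟩, hx, le_rfl⟩, rfl⟩
  have hHne : H.Nonempty := by
    obtain ⟨x, hx⟩ := hΞne
    exact ⟨_, hQmem x hx⟩
  have hcH := wcev_compact_hull hH hHne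
  -- moments of feasible measures lie in the hull
  have hmom : ∀ P : Measure (EuclideanSpace ℝ (Fin d)), IsProbabilityMeasure P → P Ξᶜ = 0 →
      ((fun i => ∫ x, ψ i x ∂P, ∫ x, Q x ∂P) : (Fin m → ℝ) × ℝ) ∈ convexHull ℝ H := by
    intro P hP hPΞ
    have hae : ∀ᵐ x ∂P, x ∈ Ξ := hPΞ
    have hres : P.restrict Ξ = P := Measure.restrict_eq_self_of_ae_mem hae
    have hQi : Integrable Q P := by
      refine Integrable.of_bound (C := C) ?_ ?_
      · rw [← hres]
        refine (aemeasurable_restrict_of_measurable_subtype hΞm ?_).aestronglyMeasurable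
        exact (upperSemicontinuousOn_iff_restrict.mpr hQu).measurable
      · filter_upwards [hae] with x hx using hC x hx
    have hψi : ∀ i, Integrable (ψ i) P := by
      intro i
      have := (hψc i).integrableOn_compact (μ := P) hΞc
      rwa [IntegrableOn, hres] at this
    have hψI : Integrable (fun x => fun i => ψ i x) P := Integrable.of_eval hψi
    have h := (convex_convexHull ℝ H).integral_mem hcH.isClosed
      (f := fun x => G (x, Q x)) (μ := P)
      (by filter_upwards [hae] with x hx using subset_convexHull ℝ H (hQmem x hx))
      (hψI.prodMk hQi)
    have he : ∫ x, G (x, Q x) ∂P = (fun i => ∫ x, ψ i x ∂P, ∫ x, Q x ∂P) := by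
      rw [integral_pair hψI hQi]
      congr 1
      funext i
      exact eval_integral hψi i
    rwa [he] at h
  -- maximise
  let T : Set ((Fin m → ℝ) × ℝ) := convexHull ℝ H ∩ {q | ∀ i, q.1 i ≤ γ i}
  have hT : IsCompact T := by
    refine hcH.inter_right ?_
    simp only [Set.ofPred_forall]
    exact isClosed_iInter fun i => isClosed_le (by fun_prop) continuous_const
  have hTne : T.Nonempty := by
    obtain ⟨P, hP, hP0, hPγ⟩ := hamb
    exact ⟨_, hmom P hP hP0, hPγ⟩
  obtain ⟨q, hqT, hqmax⟩ := hT.exists_isMaxOn hTne (f := Prod.snd) continuousOn_snd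
  have hqmax : ∀ r ∈ T, r.2 ≤ q.2 := hqmax
  obtain ⟨z, w, hz, hw, hw1, hzw⟩ := wcev_boundary (v := ((0 : Fin m → ℝ), (1 : ℝ))) hHne
    (n := m + 1) (by simp) hqT.1
    (by
      intro ε hε hmem
      have := hqmax (q + ε • (0, 1)) ⟨hmem, by simpa using hqT.2⟩
      simp at this
      linarith)
  choose y hyK hyz using hz
  have hψsum : ∀ i, ∑ j, w j * ψ i (y j).1 = q.1 i := by
    intro i
    rw [← hzw, Prod.fst_sum, Finset.sum_apply]
    refine Finset.sum_congr rfl fun j _ => ?_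
    rw [← hyz j]
    rfl
  have hQsum : q.2 ≤ ∑ j, w j * Q (y j).1 := by
    rw [← hzw, Prod.snd_sum]
    refine Finset.sum_le_sum fun j _ => ?_
    rw [← hyz j]
    exact mul_le_mul_of_nonneg_left (hyK j).2.2 (hw j)
  refine ⟨fun j => (y j).1, w, fun j => (hyK j).1.1, hw, hw1,
    fun i => (hψsum i).trans_le (hqT.2 i), ?_⟩
  symm
  apply IsGreatest.csSup_eq
  constructor
  · let P : Measure (EuclideanSpace ℝ (Fin d)) :=
      ∑ j, ENNReal.ofReal (w j) • Measure.dirac (y j).1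
    have hint : ∀ f : EuclideanSpace ℝ (Fin d) → ℝ, ∫ x, f x ∂P = ∑ j, w j * f (y j).1 := by
      intro f
      rw [integral_finsetSum_measure]
      · refine Finset.sum_congr rfl fun j _ => ?_
        rw [integral_smul_measure, integral_dirac, ENNReal.toReal_ofReal (hw j), smul_eq_mul]
      · intro j _
        exact (integrable_dirac (by simp)).smul_measure ENNReal.ofReal_ne_top
    refine ⟨P, ⟨⟨?_⟩, ?_, ?_⟩, hint Q⟩
    · simp only [P, Measure.finsetSum_apply, Measure.smul_apply, measure_univ, smul_eq_mul, mul_one]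
      rw [← ENNReal.ofReal_sum_of_nonneg (fun j _ => hw j), hw1, ENNReal.ofReal_one]
    · simp only [P, Measure.finsetSum_apply, Measure.smul_apply, smul_eq_mul]
      refine Finset.sum_eq_zero fun j _ => ?_
      rw [Measure.dirac_apply' _ hΞm.compl, Set.indicator_of_notMem, mul_zero]
      exact fun h => h (hyK j).1.1
    · intro i
      rw [hint, hψsum]
      exact hqT.2 i
  · rintro r ⟨P, ⟨hP, hP0, hPγ⟩, rfl⟩
    exact (hqmax _ ⟨hmom P hP hP0, hPγ⟩).trans hQsum
end

section
/- Let Ξ be a nonempty compact subset of ℝ^d, let Q : Ξ → ℝ and ψ_1, …, ψ_m : Ξ → ℝ be bounded Borel measurable, let γ_1, …, γ_m ∈ ℝ, and let 𝒫 be the associated ambiguity set. Let ξ_1, …, ξ_n ∈ Ξ and p*_1, …, p*_n ≥ 0 with ∑_j p*_j = 1 and ∑_j p*_j ψ_i(ξ_j) ≤ γ_i for every i, and set η* = ∑_j p*_j Q(ξ_j). Suppose α* ∈ ℝ and β*_1, …, β*_m ≥ 0 satisfy α* + ∑_{i=1}^m γ_i β*_i = η*, and set v* = sup_{ξ ∈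 Ξ} ( Q(ξ) − α* − ∑_{i=1}^m ψ_i(ξ) β*_i ). Then η* ≤ sup_{P ∈ 𝒫} ∫_Ξ Q dP ≤ η* + v*. -/
open MeasureTheory Filter

/-- (Bounds from the column-generation master/subproblem pair.)
If `η* = ∑_j p*_j Q(ξ_j)` is the value of a feasible discrete distribution, `(α*, β*)`
satisfies `α* + ∑_i γ_i β*_i = η*` with `β* ≥ 0`, and `v*` is the optimal value of the
pricing subproblem, then `η* ≤ sup_{P ∈ 𝒫} ∫ Q dP ≤ η* + v*`. -/
theorem pricing_bounds_on_WCEV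
    (d m n : ℕ) (Ξ : Set (EuclideanSpace ℝ (Fin d)))
    (hΞne : Ξ.Nonempty) (hΞc : IsCompact Ξ)
    (Q : EuclideanSpace ℝ (Fin d) → ℝ)
    (hQm : Measurable Q) (hQb : ∃ C, ∀ x ∈ Ξ, |Q x| ≤ C)
    (ψ : Fin m → EuclideanSpace ℝ (Fin d) → ℝ)
    (hψm : ∀ i, Measurable (ψ i)) (hψb : ∀ i, ∃ C, ∀ x ∈ Ξ, |ψ i x| ≤ C)
    (γ : Fin m → ℝ)
    (ξ : Fin n → EuclideanSpace ℝ (Fin d)) (hξ : ∀ j, ξ j ∈ Ξ)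
    (p : Fin n → ℝ) (hp : ∀ j, 0 ≤ p j) (hps : ∑ j, p j = 1)
    (hfeas : ∀ i, ∑ j, p j * ψ i (ξ j) ≤ γ i)
    (η : ℝ) (hη : η = ∑ j, p j * Q (ξ j))
    (α : ℝ) (β : Fin m → ℝ) (hβ : ∀ i, 0 ≤ β i)
    (hdual : α + ∑ i, γ i * β i = η)
    (v : ℝ) (hv : v = sSup {t : ℝ | ∃ x ∈ Ξ, Q x - α - ∑ i, ψ i x * β i = t}) :
    η ≤ sSup {r : ℝ | ∃ P : Measure (EuclideanSpace ℝ (Fin d)),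
        (IsProbabilityMeasure P ∧ P Ξᶜ = 0 ∧ ∀ i, ∫ x, ψ i x ∂P ≤ γ i) ∧
        (∫ x, Q x ∂P) = r} ∧
      sSup {r : ℝ | ∃ P : Measure (EuclideanSpace ℝ (Fin d)),
        (IsProbabilityMeasure P ∧ P Ξᶜ = 0 ∧ ∀ i, ∫ x, ψ i x ∂P ≤ γ i) ∧
        (∫ x, Q x ∂P) = r} ≤ η + v := by
  obtain ⟨C, hC⟩ := hQb
  choose D hD using hψb
  have hub : ∀ r ∈ {r : ℝ | ∃ P : Measure (EuclideanSpace ℝ (Fin d)),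
        (IsProbabilityMeasure P ∧ P Ξᶜ = 0 ∧ ∀ i, ∫ x, ψ i x ∂P ≤ γ i) ∧
        (∫ x, Q x ∂P) = r}, r ≤ η + v := by
    rintro r ⟨P, ⟨hP, hPΞ, hPψ⟩, rfl⟩
    have hae : ∀ᵐ x ∂P, x ∈ Ξ := by
      rw [ae_iff]
      exact hPΞ
    have hQi : Integrable Q P :=
      Integrable.of_bound hQm.aestronglyMeasurable C
        (hae.mono fun x hx => by simpa using hC x hx)
    have hψi : ∀ i, Integrable (ψ i) P := fun i =>
      Integrable.of_bound (hψm i).aestronglyMeasurable (D i)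
        (hae.mono fun x hx => by simpa using hD i x hx)
    have hbdd : BddAbove {t : ℝ | ∃ x ∈ Ξ, Q x - α - ∑ i, ψ i x * β i = t} := by
      refine ⟨C - α + ∑ i, D i * β i, ?_⟩
      rintro t ⟨x, hx, rfl⟩
      have h1 := (abs_le.mp (hC x hx)).2
      have h2 : ∑ i, -(ψ i x * β i) ≤ ∑ i, D i * β i := by
        refine Finset.sum_le_sum fun i _ => ?_
        have := (abs_le.mp (hD i x hx)).1
        nlinarith [hβ i]
      rw [Finset.sum_neg_distrib] at h2
      linarith
    have hsum : Integrable (fun x => ∑ i, ψ i x * β i) P :=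
      integrable_finsetSum _ fun i _ => (hψi i).mul_const _
    have hle : ∀ᵐ x ∂P, Q x ≤ (v + α) + ∑ i, ψ i x * β i := by
      filter_upwards [hae] with x hx
      have : Q x - α - ∑ i, ψ i x * β i ≤ v := by
        rw [hv]
        exact le_csSup hbdd ⟨x, hx, rfl⟩
      linarith
    have h3 : ∫ x, Q x ∂P ≤ ∫ x, ((v + α) + ∑ i, ψ i x * β i) ∂P :=
      integral_mono_ae hQi ((integrable_const (v + α)).add hsum) hle
    have h4 : ∫ x, ((v + α) + ∑ i, ψ i x * β i) ∂P
        = (v + α) + ∑ i, (∫ x, ψ i x ∂P) * β i := by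
      rw [integral_add (integrable_const _) hsum,
        integral_finsetSum _ fun i _ => (hψi i).mul_const _]
      simp [integral_mul_const]
    have h5 : ∑ i, (∫ x, ψ i x ∂P) * β i ≤ ∑ i, γ i * β i :=
      Finset.sum_le_sum fun i _ => mul_le_mul_of_nonneg_right (hPψ i) (hβ i)
    rw [h4] at h3
    linarith
  have hmem : η ∈ {r : ℝ | ∃ P : Measure (EuclideanSpace ℝ (Fin d)),
        (IsProbabilityMeasure P ∧ P Ξᶜ = 0 ∧ ∀ i, ∫ x, ψ i x ∂P ≤ γ i) ∧
        (∫ x, Q x ∂P) = r} := by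
    have hint : ∀ f : EuclideanSpace ℝ (Fin d) → ℝ,
        ∫ x, f x ∂(∑ j, ENNReal.ofReal (p j) • Measure.dirac (ξ j)) = ∑ j, p j * f (ξ j) := by
      intro f
      rw [integral_finsetSum_measure]
      · refine Finset.sum_congr rfl fun j _ => ?_
        rw [integral_smul_measure, integral_dirac, ENNReal.toReal_ofReal (hp j), smul_eq_mul]
      · intro j _
        exact (integrable_dirac (by simp)).smul_measure ENNReal.ofReal_ne_top
    refine ⟨∑ j, ENNReal.ofReal (p j) • Measure.dirac (ξ j), ⟨⟨?_⟩, ?_, ?_⟩, ?_⟩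
    · simp [← ENNReal.ofReal_sum_of_nonneg (fun j _ => hp j), hps]
    · simp [Measure.dirac_apply' _ hΞc.measurableSet.compl, hξ]
    · intro i
      rw [hint]
      exact hfeas i
    · rw [hint, hη]
  exact ⟨le_csSup ⟨_, hub⟩ hmem, csSup_le ⟨_, hmem⟩ hub⟩
end

section
/- Let Ξ ⊆ ℝ^d be contained in a closed ball of radius R ≥ 0, and let ε, δ > 0. Suppose ξ¹, …, ξ^K ∈ Ξ and r_1, …, r_{K−1} : Ξ → ℝ satisfy, for every k ∈ {1,…,K−1}: (a) |r_k(ξ) − r_k(ξ')| ≤ ε whenever ξ, ξ' ∈ Ξ and ‖ξ − ξ'‖ ≤ δ; (b) r_k(ξ^j) ≤ 0 for every j ∈ {1,…,k}; and (c) r_k(ξ^{k+1}) > ε. Then the points ξ¹, …, ξ^K are pairwise at Euclidean distance greater than δ, and consequently K · vol(B(0, δ/2)) ≤ vol(B(0, R + δ/2)), where vol(B(0, r)) is the Lebesgue measure of the Euclidean ball of radius r in ℝ^d; in particular only finitely many such iterates can be generated. -/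
open MeasureTheory ENNReal

/-- (Finite termination of the column-generation oracle.) If the
reduced-cost functions `r k` (for `k + 1 < K`) are uniformly continuous with modulus
`(ε, δ)` on `Ξ`, nonpositive at all previously generated scenarios `ξ 0, …, ξ k`, and
exceed `ε` at the newly generated scenario `ξ (k+1)`, then the scenarios are pairwise
more than `δ` apart; consequently `K · vol(B(0, δ/2)) ≤ vol(B(0, R + δ/2))`, so only
finitely many iterates can be generated. -/
theorem column_generation_finite_termination
    (d : ℕ) (Ξ : Set (EuclideanSpace ℝ (Fin d)))
    (x₀ : EuclideanSpace ℝ (Fin d)) (R : ℝ) (hR : 0 ≤ R)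
    (hΞ : Ξ ⊆ Metric.closedBall x₀ R)
    (ε δ : ℝ) (hε : 0 < ε) (hδ : 0 < δ)
    (K : ℕ) (ξ : Fin K → EuclideanSpace ℝ (Fin d)) (hξ : ∀ j, ξ j ∈ Ξ)
    (r : ℕ → EuclideanSpace ℝ (Fin d) → ℝ)
    (ha : ∀ k, k + 1 < K → ∀ x ∈ Ξ, ∀ y ∈ Ξ, ‖x - y‖ ≤ δ → |r k x - r k y| ≤ ε)
    (hb : ∀ k, k + 1 < K → ∀ j : Fin K, (j : ℕ) ≤ k → r k (ξ j) ≤ 0)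
    (hc : ∀ (k : ℕ) (hk : k + 1 < K), ε < r k (ξ ⟨k + 1, hk⟩)) :
    (∀ i j : Fin K, i ≠ j → δ < ‖ξ i - ξ j‖) ∧
      (K : ℝ≥0∞) *
          volume (Metric.ball (0 : EuclideanSpace ℝ (Fin d)) (δ / 2)) ≤
        volume (Metric.ball (0 : EuclideanSpace ℝ (Fin d)) (R + δ / 2)) := by

  have key : ∀ i j : Fin K, i < j → δ < ‖ξ i - ξ j‖ := by
    intro i j hij
    by_contra hcon
    have hle : ‖ξ i - ξ j‖ ≤ δ := not_lt.mp hcon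
    obtain ⟨j, hj⟩ := j
    have hij' : (i : ℕ) < j := hij
    obtain ⟨k, rfl⟩ : ∃ k, j = k + 1 := ⟨j - 1, by omega⟩
    have h1 := ha k hj _ (hξ i) _ (hξ ⟨k + 1, hj⟩) hle
    have h2 := hb k hj i (by omega)
    have h3 := hc k hj
    have h4 := (abs_le.mp h1).1
    linarith
  have sep : ∀ i j : Fin K, i ≠ j → δ < ‖ξ i - ξ j‖ := by
    intro i j hij
    rcases lt_or_gt_of_ne hij with h | h
    · exact key i j h
    · rw [norm_sub_rev]
      exact key j i h
  refine ⟨sep, ?_⟩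
  have hdisj : Pairwise (Function.onFun Disjoint fun i : Fin K => Metric.ball (ξ i) (δ / 2)) := by
    intro i j hij
    apply Metric.ball_disjoint_ball
    rw [dist_eq_norm]
    linarith [sep i j hij]
  have hsub : (⋃ i, Metric.ball (ξ i) (δ / 2)) ⊆ Metric.ball x₀ (R + δ / 2) := by
    apply Set.iUnion_subset
    intro i
    apply Metric.ball_subset_ball'
    have h := Metric.mem_closedBall.mp (hΞ (hξ i))
    linarith
  calc (K : ℝ≥0∞) * volume (Metric.ball (0 : EuclideanSpace ℝ (Fin d)) (δ / 2))
      = ∑ i : Fin K, volume (Metric.ball (ξ i) (δ / 2)) := by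
        simp [Measure.addHaar_ball_center volume (_ : EuclideanSpace ℝ (Fin d)) (δ / 2)]
    _ = volume (⋃ i, Metric.ball (ξ i) (δ / 2)) := by
        rw [measure_iUnion hdisj (fun i => measurableSet_ball), tsum_fintype]
    _ ≤ volume (Metric.ball x₀ (R + δ / 2)) := measure_mono hsub
    _ = _ := Measure.addHaar_ball_center volume x₀ (R + δ / 2)
end

section
/- Let Ξ be a nonempty compact subset of ℝ^d, let ψ_1, …, ψ_m : Ξ → ℝ be continuous, let γ_1, …, γ_m ∈ ℝ, and suppose the ambiguity set 𝒫 is nonempty. Let X be a nonempty set, f₁ : X → ℝ, and Q : X × Ξ → ℝ with Q(x,·) bounded and upper semicontinuous on Ξ for every x ∈ X. Then inf_{x ∈ X} ( f₁(x) + sup_{P ∈ 𝒫} ∫_Ξ Q(x, ξ) dP(ξ) ) equals inf_{x ∈ X} ( f₁(x) + sup { ∑_{j=1}^{m+1} p_j Q(x, ξ_j) : ξ_1, …, ξ_{m+1} ∈ Ξ, p_j ≥ 0, ∑_j p_j = 1, ∑_j p_j ψ_i(ξ_j) ≤ γ_i for all i } ). -/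
open MeasureTheory

lemma red_aux {ι V : Type*} [AddCommGroup V] [Module ℝ V] [FiniteDimensional ℝ V]
    (v : ι → V) (q : ι → ℝ) : ∀ (n : ℕ) (s : Finset ι) (p : ι → ℝ), s.card = n →
    (∀ i ∈ s, 0 ≤ p i) → ∑ i ∈ s, p i = 1 →
    ∃ (s' : Finset ι) (p' : ι → ℝ), s'.card ≤ Module.finrank ℝ V + 1 ∧
      (∀ i ∈ s', 0 ≤ p' i) ∧ ∑ i ∈ s', p' i = 1 ∧
      ∑ i ∈ s', p' i • v i = ∑ i ∈ s, p i • v i ∧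
      ∑ i ∈ s, p i * q i ≤ ∑ i ∈ s', p' i * q i := by
  classical
  intro n
  induction n with
  | zero =>
    intro s p hs hp h1
    exact ⟨s, p, by omega, hp, h1, rfl, le_rfl⟩
  | succ n ih =>
    intro s p hs hp h1
    by_cases hc : s.card ≤ Module.finrank ℝ V + 1
    · exact ⟨s, p, hc, hp, h1, rfl, le_rfl⟩
    have hnl : ¬ LinearIndepOn ℝ (fun i => (v i, (1 : ℝ))) (s : Set ι) := by
      intro hl
      have := LinearIndependent.fintype_card_le_finrank hl
      simp at this
      omega
    rw [not_linearIndepOn_finset_iff] at hnl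
    obtain ⟨g₀, hg₀, i₀, hi₀, hne₀⟩ := hnl
    obtain ⟨g, hg, hne, hq⟩ : ∃ g : ι → ℝ, ∑ i ∈ s, g i • (v i, (1 : ℝ)) = 0 ∧ g i₀ ≠ 0 ∧
        0 ≤ ∑ i ∈ s, g i * q i := by
      rcases le_total 0 (∑ i ∈ s, g₀ i * q i) with h | h
      · exact ⟨g₀, hg₀, hne₀, h⟩
      · refine ⟨fun i => - g₀ i, ?_, by simpa using hne₀, ?_⟩
        · simp only [neg_smul, Finset.sum_neg_distrib, hg₀, neg_zero]
        · simp only [neg_mul, Finset.sum_neg_distrib]; linarith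
    have hgv : ∑ i ∈ s, g i • v i = 0 := by
      have := congrArg Prod.fst hg
      simpa [Prod.fst_sum] using this
    have hg1 : ∑ i ∈ s, g i = 0 := by
      have := congrArg Prod.snd hg
      simpa [Prod.snd_sum] using this
    have hneg : (s.filter (fun i => g i < 0)).Nonempty := by
      by_contra hcon
      rw [Finset.not_nonempty_iff_eq_empty, Finset.filter_eq_empty_iff] at hcon
      have := (Finset.sum_eq_zero_iff_of_nonneg (fun i hi => not_lt.1 (hcon hi))).1 hg1
      exact hne (this i₀ hi₀)
    obtain ⟨b, hb, hmin⟩ := Finset.exists_min_image _ (fun i => p i / (- g i)) hneg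
    rw [Finset.mem_filter] at hb
    set τ := p b / (- g b) with hτ
    have hτ0 : 0 ≤ τ := div_nonneg (hp b hb.1) (by linarith [hb.2])
    have hpb : p b + τ * g b = 0 := by
      rw [hτ]; have := hb.2.ne; field_simp; ring
    have hp' : ∀ i ∈ s, 0 ≤ p i + τ * g i := by
      intro i hi
      by_cases h : g i < 0
      · have h2 := hmin i (by simp [hi, h])
        rw [le_div_iff₀ (by linarith)] at h2
        linarith
      · exact add_nonneg (hp i hi) (mul_nonneg hτ0 (not_lt.1 h))
    obtain ⟨s', p', h1', h2', h3', h4', h5'⟩ := ih (s.erase b) (fun i => p i + τ * g i)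
      (by rw [Finset.card_erase_of_mem hb.1]; omega)
      (fun i hi => hp' i (Finset.mem_of_mem_erase hi))
      (by rw [Finset.sum_erase s hpb, Finset.sum_add_distrib, ← Finset.mul_sum, hg1, h1]; simp)
    refine ⟨s', p', h1', h2', h3', ?_, ?_⟩
    · rw [h4', Finset.sum_erase s (by rw [hpb, zero_smul])]
      simp only [add_smul, mul_smul, Finset.sum_add_distrib, ← Finset.smul_sum, hgv]
      simp
    · refine le_trans ?_ h5'
      rw [Finset.sum_erase s (by rw [hpb, zero_mul])]
      simp only [add_mul, mul_assoc, Finset.sum_add_distrib, ← Finset.mul_sum]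
      nlinarith [mul_nonneg hτ0 hq]

lemma red_fin {ι α V : Type*} [Fintype ι] [AddCommGroup V] [Module ℝ V] [FiniteDimensional ℝ V]
    (a : ι → α) (v : α → V) (q : α → ℝ) (p : ι → ℝ) (hp : ∀ i, 0 ≤ p i) (h1 : ∑ i, p i = 1)
    (N : ℕ) (hN : Module.finrank ℝ V + 1 = N) :
    ∃ (z : Fin N → α) (w : Fin N → ℝ), (∀ j, z j ∈ Set.range a) ∧ (∀ j, 0 ≤ w j) ∧
      ∑ j, w j = 1 ∧ ∑ j, w j • v (z j) = ∑ i, p i • v (a i) ∧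
      ∑ i, p i * q (a i) ≤ ∑ j, w j * q (z j) := by
  classical
  obtain ⟨s, p', hc, hp', h1', hv, hq⟩ := red_aux (fun i => v (a i)) (fun i => q (a i)) _
    Finset.univ p rfl (fun i _ => hp i) h1
  have hne : s.Nonempty := by
    by_contra h
    rw [Finset.not_nonempty_iff_eq_empty] at h
    simp [h] at h1'
  obtain ⟨i₀, -⟩ := hne
  obtain ⟨e⟩ : Nonempty (s ↪ Fin N) :=
    Function.Embedding.nonempty_of_card_le (by simp; omega)
  have key : ∀ {M : Type _} [AddCommMonoid M] (f : ι → M) (g : Fin N → M),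
      (∀ j, j ∉ Set.range e → g j = 0) → (∀ i : s, f i = g (e i)) → ∑ i ∈ s, f i = ∑ j, g j := by
    intro M _ f g h0 h
    rw [← Finset.sum_coe_sort]
    exact Fintype.sum_of_injective e e.injective _ _ h0 h
  have key' : ∀ (f : ι → ℝ) (g : Fin N → ℝ),
      (∀ j, j ∉ Set.range e → g j = 0) → (∀ i : s, f i = g (e i)) → ∑ i ∈ s, f i = ∑ j, g j := by
    intro f g h0 h
    rw [← Finset.sum_coe_sort]
    exact Fintype.sum_of_injective e e.injective _ _ h0 h
  set w : Fin N → ℝ := Function.extend e (fun i => p' i) 0 with hw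
  set z : Fin N → α := Function.extend e (fun i => a i) (fun _ => a i₀) with hz
  have hw0 : ∀ j, j ∉ Set.range e → w j = 0 := by
    intro j hj
    rw [hw, Function.extend_apply' _ _ _ (by simpa using hj)]; rfl
  have hwe : ∀ i : s, w (e i) = p' i := fun i => e.injective.extend_apply _ _ _
  have hze : ∀ i : s, z (e i) = a i := fun i => e.injective.extend_apply _ _ _
  refine ⟨z, w, ?_, ?_, ?_, ?_, ?_⟩
  · intro j
    by_cases hj : j ∈ Set.range e
    · obtain ⟨i, rfl⟩ := hj
      exact ⟨i, (hze i).symm⟩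
    · exact ⟨i₀, by rw [hz, Function.extend_apply' _ _ _ (by simpa using hj)]⟩
  · intro j
    by_cases hj : j ∈ Set.range e
    · obtain ⟨i, rfl⟩ := hj
      rw [hwe]; exact hp' i i.2
    · rw [hw0 j hj]
  · rw [← h1']
    exact (key' _ _ hw0 (fun i => (hwe i).symm)).symm
  · rw [← hv]
    refine (key _ _ (fun j hj => by rw [hw0 j hj, zero_smul]) (fun i => ?_)).symm
    rw [hwe, hze]
  · refine hq.trans (le_of_eq ?_)
    refine key' _ _ (fun j hj => by rw [hw0 j hj, zero_mul]) (fun i => ?_)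
    rw [hwe, hze]

lemma compact_hull {V : Type*} [NormedAddCommGroup V] [NormedSpace ℝ V] [FiniteDimensional ℝ V]
    {K : Set V} (hK : IsCompact K) : IsCompact (convexHull ℝ K) := by
  have : convexHull ℝ K =
      (fun y : (Fin (Module.finrank ℝ V + 1) → ℝ) × (Fin (Module.finrank ℝ V + 1) → V) =>
        ∑ j, y.1 j • y.2 j) ''
      (stdSimplex ℝ (Fin (Module.finrank ℝ V + 1)) ×ˢ Set.pi Set.univ (fun _ => K)) := by
    ext x
    constructor
    · intro hx
      obtain ⟨ι, _, w, z, hw0, hw1, hz, rfl⟩ := mem_convexHull_iff_exists_fintype.1 hx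
      obtain ⟨z', w', hz', hw', h1, h2, -⟩ := red_fin z id (fun _ => 0) w hw0 hw1 _ rfl
      refine ⟨(w', z'), ⟨⟨hw', h1⟩, fun j _ => ?_⟩, h2⟩
      obtain ⟨i, hi⟩ := hz' j
      have h3 := hz i
      rw [hi] at h3
      exact h3
    · rintro ⟨⟨w, z⟩, ⟨⟨hw, h1⟩, hz⟩, rfl⟩
      exact mem_convexHull_of_exists_fintype w z hw h1 (fun j => hz j trivial) rfl
  rw [this]
  refine IsCompact.image ((isCompact_stdSimplex ℝ _).prod (isCompact_univ_pi fun _ => hK)) ?_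
  fun_prop

/-- From a measure to a finitely supported one. -/
lemma exists_discrete {E : Type*} [TopologicalSpace E] [T2Space E] [MeasurableSpace E]
    [BorelSpace E] {m : ℕ} {Ξ : Set E} (hΞc : IsCompact Ξ)
    (ψ : Fin m → E → ℝ) (hψc : ∀ i, ContinuousOn (ψ i) Ξ) (q : E → ℝ)
    (hq : UpperSemicontinuousOn q Ξ) (C : ℝ) (hC : ∀ z ∈ Ξ, |q z| ≤ C)
    (P : Measure E) [IsProbabilityMeasure P] (hP : P Ξᶜ = 0)
    (hψi : ∀ i, Integrable (ψ i) P) (hqi : Integrable q P) :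
    ∃ (z : Fin (m + 1) → E) (w : Fin (m + 1) → ℝ), (∀ j, z j ∈ Ξ) ∧ (∀ j, 0 ≤ w j) ∧
      ∑ j, w j = 1 ∧ (∀ i, ∑ j, w j * ψ i (z j) = ∫ y, ψ i y ∂P) ∧
      ∫ y, q y ∂P ≤ ∑ j, w j * q (z j) := by
  set H : Set (E × ℝ) := (Ξ ×ˢ Set.Icc (-C) C) ∩ {y | y.1 ∈ Ξ ∧ y.2 ≤ q y.1} with hH
  have hHc : IsCompact H := (hΞc.prod isCompact_Icc).inter_right
    ((upperSemicontinuousOn_iff_isClosed_hypograph hΞc.isClosed).1 hq)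
  set F : E × ℝ → (Fin m → ℝ) × ℝ := fun y => (fun i => ψ i y.1, y.2) with hF
  have hFc : ContinuousOn F H := by
    refine ContinuousOn.prodMk (continuousOn_pi.2 fun i => ?_) continuous_snd.continuousOn
    exact (hψc i).comp continuous_fst.continuousOn (fun y hy => hy.1.1)
  have hK : IsCompact (convexHull ℝ (F '' H)) := compact_hull (hHc.image_of_continuousOn hFc)
  have hint : Integrable (fun y => ((fun i => ψ i y, q y) : (Fin m → ℝ) × ℝ)) P :=
    (Integrable.of_eval hψi).prodMk hqi
  have hae : ∀ᵐ y ∂P, y ∈ Ξ := by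
    rw [ae_iff]; exact hP
  have hmem := (convex_convexHull ℝ (F '' H)).integral_mem hK.isClosed (f := fun y =>
    ((fun i => ψ i y, q y) : (Fin m → ℝ) × ℝ)) (μ := P) (by
      filter_upwards [hae] with y hy
      refine subset_convexHull ℝ _ ⟨(y, q y), ⟨⟨hy, ?_⟩, hy, le_rfl⟩, rfl⟩
      exact abs_le.1 (hC y hy)) hint
  rw [integral_pair (Integrable.of_eval hψi) hqi] at hmem
  obtain ⟨ι, _, p, a, hp, hp1, ha, hsum⟩ := mem_convexHull_iff_exists_fintype.1 hmem
  choose y hyH hyF using ha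
  obtain ⟨z, w, hz, hw, hw1, hv, hqq⟩ := red_fin (fun i => (y i).1)
    (fun e => (fun i => ψ i e : Fin m → ℝ)) q p hp hp1 (m + 1) (by simp)
  refine ⟨z, w, ?_, hw, hw1, ?_, ?_⟩
  · intro j
    obtain ⟨i, hi⟩ := hz j
    exact hi ▸ (hyH i).1.1
  · intro i
    have h1 := congrFun hv i
    have h2 := congrFun (congrArg Prod.fst hsum) i
    dsimp only at h2
    rw [eval_integral hψi] at h2
    simp only [Prod.fst_sum, Finset.sum_apply, Pi.smul_apply, Prod.smul_fst, smul_eq_mul] at h1 h2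
    rw [h1, ← h2]
    refine Finset.sum_congr rfl fun k _ => ?_
    rw [← hyF k]
  · refine le_trans ?_ hqq
    have h2 := congrArg Prod.snd hsum
    simp only [Prod.snd_sum, Prod.smul_snd, smul_eq_mul] at h2
    rw [← h2]
    refine Finset.sum_le_sum fun k _ => mul_le_mul_of_nonneg_left ?_ (hp k)
    rw [← hyF k]
    exact (hyH k).2.2

/-- (Equivalent reformulation of two-stage DRO.) With continuous
moment functions `ψ_i` on the nonempty compact set `Ξ`, a nonempty ambiguity set, and
a recourse value function `Q(x, ·)` bounded and upper semicontinuous on `Ξ` for every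
first-stage decision `x`, the two-stage DRO value equals the value obtained by
replacing the inner worst-case expectation by the supremum over distributions supported
on at most `m + 1` points of `Ξ`. -/
theorem two_stage_DRO_discrete_reformulation
    (d m : ℕ) (Ξ : Set (EuclideanSpace ℝ (Fin d)))
    (hΞne : Ξ.Nonempty) (hΞc : IsCompact Ξ)
    (ψ : Fin m → EuclideanSpace ℝ (Fin d) → ℝ)
    (hψc : ∀ i, ContinuousOn (ψ i) Ξ)
    (γ : Fin m → ℝ)
    (hamb : ∃ P : Measure (EuclideanSpace ℝ (Fin d)),
      IsProbabilityMeasure P ∧ P Ξᶜ = 0 ∧ ∀ i, ∫ x, ψ i x ∂P ≤ γ i)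
    (X : Type*) [Nonempty X] (f₁ : X → ℝ)
    (Q : X → EuclideanSpace ℝ (Fin d) → ℝ)
    (hQu : ∀ x, UpperSemicontinuousOn (Q x) Ξ)
    (hQb : ∀ x, ∃ C, ∀ ξ' ∈ Ξ, |Q x ξ'| ≤ C) :
    (⨅ x : X, (f₁ x +
        sSup {r : ℝ | ∃ P : Measure (EuclideanSpace ℝ (Fin d)),
          (IsProbabilityMeasure P ∧ P Ξᶜ = 0 ∧ ∀ i, ∫ z, ψ i z ∂P ≤ γ i) ∧
          (∫ z, Q x z ∂P) = r})) =
      (⨅ x : X, (f₁ x +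
        sSup {r : ℝ | ∃ (ξv : Fin (m + 1) → EuclideanSpace ℝ (Fin d))
            (p : Fin (m + 1) → ℝ),
          (∀ j, ξv j ∈ Ξ) ∧ (∀ j, 0 ≤ p j) ∧ (∑ j, p j = 1) ∧
          (∀ i, ∑ j, p j * ψ i (ξv j) ≤ γ i) ∧
          (∑ j, p j * Q x (ξv j)) = r})) := by
  have hΞm : MeasurableSet Ξ := hΞc.isClosed.measurableSet
  have hres : ∀ P : Measure (EuclideanSpace ℝ (Fin d)), P Ξᶜ = 0 → P.restrict Ξ = P := by
    intro P hP
    refine Measure.restrict_eq_self_of_ae_mem ?_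
    rw [ae_iff]; exact hP
  have hψi : ∀ P : Measure (EuclideanSpace ℝ (Fin d)), IsProbabilityMeasure P → P Ξᶜ = 0 →
      ∀ i, Integrable (ψ i) P := by
    intro P _ hP i
    have := (hψc i).integrableOn_compact (μ := P) hΞc
    rwa [IntegrableOn, hres P hP] at this
  congr 1
  funext x
  congr 1
  obtain ⟨C, hC⟩ := hQb x
  have hae : ∀ P : Measure (EuclideanSpace ℝ (Fin d)), P Ξᶜ = 0 → ∀ᵐ y ∂P, |Q x y| ≤ C := by
    intro P hP
    have : ∀ᵐ y ∂P, y ∈ Ξ := by rw [ae_iff]; exact hP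
    filter_upwards [this] with y hy using hC y hy
  have hQi : ∀ P : Measure (EuclideanSpace ℝ (Fin d)), IsProbabilityMeasure P → P Ξᶜ = 0 →
      Integrable (Q x) P := by
    intro P _ hP
    have hm : Measurable (fun y : Ξ => Q x y) :=
      UpperSemicontinuous.measurable (upperSemicontinuousOn_iff_restrict.2 (hQu x))
    have h2 := aemeasurable_restrict_of_measurable_subtype (μ := P) hΞm hm
    rw [hres P hP] at h2
    exact Integrable.of_bound h2.aestronglyMeasurable C (hae P hP)
  have hdisc : ∀ P : Measure (EuclideanSpace ℝ (Fin d)), IsProbabilityMeasure P → P Ξᶜ = 0 →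
      _ := fun P hPp hP =>
    exists_discrete hΞc ψ hψc (Q x) (hQu x) C hC P hP (hψi P hPp hP) (hQi P hPp hP)
  apply le_antisymm
  · obtain ⟨P, hPp, hP, hPγ⟩ := hamb
    refine csSup_le ⟨_, P, ⟨hPp, hP, hPγ⟩, rfl⟩ ?_
    rintro r ⟨P, ⟨hPp, hP, hPγ⟩, rfl⟩
    obtain ⟨z, w, hz, hw, hw1, hv, hq⟩ := hdisc P hPp hP
    refine le_csSup_of_le ?_ ⟨z, w, hz, hw, hw1, fun i => (hv i).le.trans (hPγ i), rfl⟩ hq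
    refine ⟨C, ?_⟩
    rintro r ⟨z, w, hz, hw, hw1, -, rfl⟩
    calc ∑ j, w j * Q x (z j) ≤ ∑ j, w j * C := Finset.sum_le_sum fun j _ =>
          mul_le_mul_of_nonneg_left (abs_le.1 (hC _ (hz j))).2 (hw j)
      _ = C := by rw [← Finset.sum_mul, hw1, one_mul]
  · obtain ⟨P, hPp, hP, hPγ⟩ := hamb
    obtain ⟨z, w, hz, hw, hw1, hv, hq⟩ := hdisc P hPp hP
    refine csSup_le ⟨_, z, w, hz, hw, hw1, fun i => (hv i).le.trans (hPγ i), rfl⟩ ?_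
    rintro r ⟨z, w, hz, hw, hw1, hv, rfl⟩
    refine le_csSup ?_ ?_
    · refine ⟨C, ?_⟩
      rintro r ⟨P, ⟨hPp, hP, -⟩, rfl⟩
      calc ∫ y, Q x y ∂P ≤ ∫ y, C ∂P := integral_mono_ae (hQi P hPp hP) (integrable_const C)
            ((hae P hP).mono fun y hy => (abs_le.1 hy).2)
        _ = C := by simp
    · have hI : ∀ f : EuclideanSpace ℝ (Fin d) → ℝ,
          ∫ y, f y ∂(∑ j, ENNReal.ofReal (w j) • Measure.dirac (z j)) = ∑ j, w j * f (z j) := by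
        intro f
        rw [integral_finsetSum_measure]
        · refine Finset.sum_congr rfl fun j _ => ?_
          rw [integral_smul_measure, integral_dirac, ENNReal.toReal_ofReal (hw j), smul_eq_mul]
        · intro j _
          exact (integrable_dirac (by simp)).smul_measure ENNReal.ofReal_ne_top
      refine ⟨∑ j, ENNReal.ofReal (w j) • Measure.dirac (z j), ⟨⟨?_⟩, ?_, ?_⟩, hI _⟩
      · simp only [Measure.coe_finsetSum, Finset.sum_apply, Measure.smul_apply, measure_univ,
          smul_eq_mul, mul_one]
        rw [← ENNReal.ofReal_sum_of_nonneg (fun j _ => hw j), hw1, ENNReal.ofReal_one]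
      · simp only [Measure.coe_finsetSum, Finset.sum_apply, Measure.smul_apply, smul_eq_mul]
        refine Finset.sum_eq_zero fun j _ => ?_
        rw [Measure.dirac_apply' _ hΞm.compl]
        simp [hz j]
      · intro i
        rw [hI]; exact hv i
end

section
/- Let Ξ be a nonempty compact subset of ℝ^d, let Q̃ : Ξ → ℝ be bounded and upper semicontinuous, let ξ^e_1, …, ξ^e_N ∈ Ξ, let p^e_1, …, p^e_N > 0 with ∑_{i=1}^N p^e_i = 1, and let r ≥ 0. Then the value sup { ∑_{i=1}^N p^e_i ∫_Ξ Q̃ dP_i : P_1, …, P_N Borel probability measures on Ξ with ∑_{i=1}^N p^e_i ∫_Ξ ‖ξ − ξ^e_i‖ dP_i(ξ) ≤ r } is attained, and it equals the maximum of ∑_{i=1}^N p^e_i ( Q̃(ξ_{i1}) p_{i1} + Q̃(ξ_{i2}) p_{i2} ) over all ξ_{i1}, ξ_{i2} ∈ Ξ and p_{i1}, p_{i2} ≥ 0 (i = 1,…,N) satisfying p_{i1} + p_{i2} = 1 for every i and ∑_{i=1}^N p^e_i ( ‖ξ_{i1} − ξ^e_i‖ p_{i1} + ‖ξ_{i2}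 − ξ^e_i‖ p_{i2} ) ≤ r; i.e. the Wasserstein worst-case expected value is attained by a distribution whose conditional distribution given each empirical sample ξ^e_i is supported on at most two points. -/
open MeasureTheory

/-- Sorted three-to-two reduction. -/
lemma three_two_sorted {K : Set (ℝ × ℝ)} {a b e : ℝ × ℝ} (ha : a ∈ K) (hb : b ∈ K) (he : e ∈ K)
    (hab : a.1 ≤ b.1) (hbe : b.1 ≤ e.1) {u v w : ℝ} (hu : 0 ≤ u) (hv : 0 ≤ v) (hw : 0 ≤ w) :
    ∃ x ∈ K, ∃ y ∈ K, ∃ s t : ℝ, 0 ≤ s ∧ 0 ≤ t ∧ s + t = u + v + w ∧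
      s * x.1 + t * y.1 ≤ u * a.1 + v * b.1 + w * e.1 ∧
      u * a.2 + v * b.2 + w * e.2 ≤ s * x.2 + t * y.2 := by
  obtain ⟨a1, a2⟩ := a
  obtain ⟨b1, b2⟩ := b
  obtain ⟨e1, e2⟩ := e
  simp only at hab hbe ⊢
  obtain ⟨m, hm⟩ : ∃ m, m = b1 - a1 := ⟨_, rfl⟩
  obtain ⟨n, hn⟩ : ∃ n, n = e1 - b1 := ⟨_, rfl⟩
  have hm0 : 0 ≤ m := by linarith
  have hn0 : 0 ≤ n := by linarith
  obtain rfl : b1 = a1 + m := by linarith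
  obtain rfl : e1 = a1 + m + n := by linarith
  rcases eq_or_lt_of_le (add_nonneg hm0 hn0) with h0 | hD
  · obtain rfl : m = 0 := by linarith
    obtain rfl : n = 0 := by linarith
    by_cases h1 : b2 ≤ a2
    · exact ⟨_, ha, _, he, u + v, w, by positivity, hw, by ring, by simp only; linarith,
        by simp only; nlinarith⟩
    · exact ⟨_, hb, _, he, u + v, w, by positivity, hw, by ring, by simp only; linarith,
        by simp only; nlinarith⟩
  by_cases hq : (m + n) * b2 ≤ n * a2 + m * e2
  · refine ⟨_, ha, _, he, u + v * (n / (m + n)), w + v * (m / (m + n)), by positivity,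
      by positivity, by field_simp; ring, le_of_eq (by field_simp; ring), ?_⟩
    have : b2 ≤ n / (m + n) * a2 + m / (m + n) * e2 := by
      rw [div_mul_eq_mul_div, div_mul_eq_mul_div, ← add_div, le_div_iff₀ hD]; linarith
    simp only
    nlinarith
  push Not at hq
  -- move weight `l` in the reverse direction
  have key : ∀ l : ℝ, 0 ≤ l → u * a2 + v * b2 + w * e2 ≤
      (u - l * n) * a2 + (v + l * (m + n)) * b2 + (w - l * m) * e2 := by
    intro l hl
    nlinarith
  by_cases h : u * m ≤ w * n ∧ 0 < n
  · obtain ⟨h, hn1⟩ := h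
    have hl : 0 ≤ u / n := by positivity
    have hz : u / n * n = u := by field_simp
    have hk := key _ hl
    have h2 : u / n * m ≤ w := by
      rw [div_mul_eq_mul_div, div_le_iff₀ hn1]; exact h
    refine ⟨_, hb, _, he, v + u / n * (m + n), w - u / n * m, by positivity, by linarith,
      by linarith, le_of_eq ?_, ?_⟩
    · simp only
      linear_combination (a1 + m) * hz - hz * m
    · rw [hz] at hk
      simp only
      linarith
  · have hm1 : 0 < m := by
      rcases eq_or_lt_of_le hm0 with h0 | h0
      · exfalso
        subst h0
        exact h ⟨by nlinarith [mul_nonneg hw hn0], by linarith⟩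
      · exact h0
    have hl : 0 ≤ w / m := by positivity
    have hz : w / m * m = w := by field_simp
    have hk := key _ hl
    have h2 : w / m * n ≤ u := by
      rw [div_mul_eq_mul_div, div_le_iff₀ hm1]
      by_contra hc
      push Not at hc
      refine h ⟨hc.le, ?_⟩
      by_contra hn2
      obtain rfl : n = 0 := by linarith
      nlinarith [mul_nonneg hu hm0]
    refine ⟨_, ha, _, hb, u - w / m * n, v + w / m * (m + n), by linarith, by positivity,
      by linarith, le_of_eq ?_, ?_⟩
    · simp only
      linear_combination (a1 + m) * hz + n * hz
    · rw [hz] at hk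
      simp only
      linarith

lemma three_two {K : Set (ℝ × ℝ)} {a b e : ℝ × ℝ} (ha : a ∈ K) (hb : b ∈ K) (he : e ∈ K)
    {u v w : ℝ} (hu : 0 ≤ u) (hv : 0 ≤ v) (hw : 0 ≤ w) :
    ∃ x ∈ K, ∃ y ∈ K, ∃ s t : ℝ, 0 ≤ s ∧ 0 ≤ t ∧ s + t = u + v + w ∧
      s * x.1 + t * y.1 ≤ u * a.1 + v * b.1 + w * e.1 ∧
      u * a.2 + v * b.2 + w * e.2 ≤ s * x.2 + t * y.2 := by
  have aux : ∀ {a b e : ℝ × ℝ} {u v w : ℝ}, a ∈ K → b ∈ K → e ∈ K → 0 ≤ u → 0 ≤ v → 0 ≤ w →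
      a.1 ≤ b.1 → 
    ∃ x ∈ K, ∃ y ∈ K, ∃ s t : ℝ, 0 ≤ s ∧ 0 ≤ t ∧ s + t = u + v + w ∧
      s * x.1 + t * y.1 ≤ u * a.1 + v * b.1 + w * e.1 ∧
      u * a.2 + v * b.2 + w * e.2 ≤ s * x.2 + t * y.2 := by
    intro a b e u v w ha hb he hu hv hw hab
    rcases le_total b.1 e.1 with h | h
    · exact three_two_sorted ha hb he hab h hu hv hw
    rcases le_total a.1 e.1 with h' | h'
    · obtain ⟨x, hx, y, hy, s, t, hs, ht, h1, h2, h3⟩ :=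
        three_two_sorted ha he hb h' h hu hw hv
      exact ⟨x, hx, y, hy, s, t, hs, ht, by linarith, by linarith, by linarith⟩
    · obtain ⟨x, hx, y, hy, s, t, hs, ht, h1, h2, h3⟩ :=
        three_two_sorted he ha hb h' hab hw hu hv
      exact ⟨x, hx, y, hy, s, t, hs, ht, by linarith, by linarith, by linarith⟩
  rcases le_total a.1 b.1 with h | h
  · exact aux ha hb he hu hv hw h
  · obtain ⟨x, hx, y, hy, s, t, hs, ht, h1, h2, h3⟩ := aux hb ha he hv hu hw h
    exact ⟨x, hx, y, hy, s, t, hs, ht, by linarith, by linarith, by linarith⟩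

/-- Points dominated by a two-point mixture. -/
def domSet (K : Set (ℝ × ℝ)) : Set (ℝ × ℝ) :=
  {z | ∃ x ∈ K, ∃ y ∈ K, ∃ s t : ℝ, 0 ≤ s ∧ 0 ≤ t ∧ s + t = 1 ∧
      s * x.1 + t * y.1 ≤ z.1 ∧ z.2 ≤ s * x.2 + t * y.2}

lemma convex_domSet (K : Set (ℝ × ℝ)) : Convex ℝ (domSet K) := by
  rintro z ⟨a, ha, b, hb, s, t, hs, ht, hst, h1, h2⟩ z' ⟨e, he, f, hf, s', t', hs', ht', hst',
    h1', h2'⟩ p q hp hq hpq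
  obtain ⟨x, hx, y, hy, k, l, hk, hl, g1, g2, g3⟩ := three_two ha hb he (mul_nonneg hp hs)
    (mul_nonneg hp ht) (mul_nonneg hq hs')
  obtain ⟨x', hx', y', hy', k', l', hk', hl', g1', g2', g3'⟩ := three_two hx hy hf hk hl
    (mul_nonneg hq ht')
  refine ⟨x', hx', y', hy', k', l', hk', hl', ?_, ?_, ?_⟩
  · rw [g1', g1]
    linear_combination p * hst + q * hst' + hpq
  · simp only [Prod.fst_add, Prod.smul_fst, smul_eq_mul]
    nlinarith
  · simp only [Prod.snd_add, Prod.smul_snd, smul_eq_mul]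
    nlinarith

/-- Two-point mixtures. -/
def mixSet (K : Set (ℝ × ℝ)) : Set (ℝ × ℝ) :=
  (fun p : (ℝ × ℝ) × (ℝ × ℝ) × ℝ => p.2.2 • p.1 + (1 - p.2.2) • p.2.1) ''
    (K ×ˢ K ×ˢ Set.Icc (0:ℝ) 1)

lemma isCompact_mixSet {K : Set (ℝ × ℝ)} (hK : IsCompact K) : IsCompact (mixSet K) := by
  refine (hK.prod (hK.prod isCompact_Icc)).image ?_
  fun_prop

lemma mem_mixSet {K : Set (ℝ × ℝ)} {a b : ℝ × ℝ} (ha : a ∈ K) (hb : b ∈ K) {s t : ℝ}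
    (hs : 0 ≤ s) (ht : 0 ≤ t) (hst : s + t = 1) :
    (s * a.1 + t * b.1, s * a.2 + t * b.2) ∈ mixSet K := by
  obtain rfl : t = 1 - s := by linarith
  exact ⟨(a, b, s), ⟨ha, hb, hs, by linarith⟩, by ext <;> simp⟩

open scoped Pointwise in
lemma isClosed_domSet {K : Set (ℝ × ℝ)} (hK : IsCompact K) : IsClosed (domSet K) := by
  have : domSet K = mixSet K + (Set.Ici (0:ℝ) ×ˢ Set.Iic (0:ℝ)) := by
    ext z
    rw [Set.mem_add]
    constructor
    · rintro ⟨a, ha, b, hb, s, t, hs, ht, hst, h1, h2⟩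
      refine ⟨_, mem_mixSet ha hb hs ht hst, (z.1 - (s * a.1 + t * b.1),
        z.2 - (s * a.2 + t * b.2)), ⟨?_, ?_⟩, ?_⟩
      · simpa using h1
      · simpa using h2
      · ext <;> simp
    · rintro ⟨_, ⟨⟨a, b, s⟩, ⟨ha, hb, hs, hs1⟩, rfl⟩, ⟨c, q⟩, ⟨hc, hq⟩, rfl⟩
      refine ⟨a, ha, b, hb, s, 1 - s, hs, by simpa using hs1, by ring, ?_, ?_⟩
      · simpa using hc
      · simpa using hq
  rw [this]
  exact (isClosed_Ici.prod isClosed_Iic).add_left_of_isCompact (isCompact_mixSet hK)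

/-- Truncated hypograph in the (cost, value) plane. -/
def hypoSet {E : Type*} [NormedAddCommGroup E] (Ξ : Set E) (Q : E → ℝ) (C : ℝ) (e : E) :
    Set (ℝ × ℝ) :=
  (fun p : E × ℝ => (‖p.1 - e‖, p.2)) '' {p | p.1 ∈ Ξ ∧ -C ≤ p.2 ∧ p.2 ≤ Q p.1}

lemma isCompact_hypoSet {E : Type*} [NormedAddCommGroup E] {Ξ : Set E} (hΞc : IsCompact Ξ)
    {Q : E → ℝ} (hQu : UpperSemicontinuousOn Q Ξ) {C : ℝ} (hC : ∀ x ∈ Ξ, |Q x| ≤ C) (e : E) :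
    IsCompact (hypoSet Ξ Q C e) := by
  refine IsCompact.image ?_ (by fun_prop)
  have h1 := (upperSemicontinuousOn_iff_isClosed_hypograph hΞc.isClosed).1 hQu
  refine ((hΞc.prod (isCompact_Icc (a := -C) (b := C))).inter_right h1).of_isClosed_subset ?_ ?_
  · have : {p : E × ℝ | p.1 ∈ Ξ ∧ -C ≤ p.2 ∧ p.2 ≤ Q p.1} =
        {p : E × ℝ | p.1 ∈ Ξ ∧ p.2 ≤ Q p.1} ∩ {p | -C ≤ p.2} := by
      ext p; simp; tauto
    rw [this]
    exact h1.inter (isClosed_le continuous_const continuous_snd)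
  · rintro ⟨x, q⟩ ⟨hx, hq, hq'⟩
    exact ⟨⟨hx, hq, hq'.trans ((le_abs_self _).trans (hC x hx))⟩, hx, hq'⟩

lemma mem_hypoSet {E : Type*} [NormedAddCommGroup E] {Ξ : Set E}
    {Q : E → ℝ} {C : ℝ} (hC : ∀ x ∈ Ξ, |Q x| ≤ C) (e : E) {x : E} (hx : x ∈ Ξ) :
    (‖x - e‖, Q x) ∈ hypoSet Ξ Q C e :=
  ⟨(x, Q x), ⟨hx, (abs_le.1 (hC x hx)).1, le_rfl⟩, rfl⟩

lemma integrable_of_usc {E : Type*} [NormedAddCommGroup E] [MeasurableSpace E] [BorelSpace E]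
    {Ξ : Set E} (hΞc : IsCompact Ξ)
    {Q : E → ℝ} (hQu : UpperSemicontinuousOn Q Ξ) {C : ℝ} (hC : ∀ x ∈ Ξ, |Q x| ≤ C)
    (P : Measure E) [IsProbabilityMeasure P] (hP : P Ξᶜ = 0) : Integrable Q P := by
  have hm : MeasurableSet Ξ := hΞc.isClosed.measurableSet
  have hae : ∀ᵐ x ∂P, x ∈ Ξ := by rwa [ae_iff]
  have hres : P.restrict Ξ = P := Measure.restrict_eq_self_of_ae_mem hae
  have h1 : AEMeasurable Q P := by
    rw [← hres]
    refine aemeasurable_restrict_of_measurable_subtype hm ?_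
    exact (upperSemicontinuousOn_iff_restrict.2 hQu).measurable
  refine Integrable.of_bound h1.aestronglyMeasurable C ?_
  filter_upwards [hae] with x hx
  exact hC x hx

lemma moment_mem {E : Type*} [NormedAddCommGroup E] [MeasurableSpace E] [BorelSpace E]
    {Ξ : Set E} (hΞc : IsCompact Ξ)
    {Q : E → ℝ} (hQu : UpperSemicontinuousOn Q Ξ) {C : ℝ} (hC : ∀ x ∈ Ξ, |Q x| ≤ C) (e : E)
    (P : Measure E) [IsProbabilityMeasure P] (hP : P Ξᶜ = 0) :
    (∫ x, ‖x - e‖ ∂P, ∫ x, Q x ∂P) ∈ domSet (hypoSet Ξ Q C e) := by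
  have hae : ∀ᵐ x ∂P, x ∈ Ξ := by rwa [ae_iff]
  have hQ := integrable_of_usc hΞc hQu hC P hP
  have hcont : Continuous fun x : E => ‖x - e‖ := by fun_prop
  obtain ⟨B, hB⟩ := hΞc.exists_bound_of_continuousOn hcont.continuousOn
  have hc : Integrable (fun x => ‖x - e‖) P :=
    integrable_of_usc hΞc (hcont.upperSemicontinuous.upperSemicontinuousOn _) hB P hP
  rw [← integral_pair hc hQ]
  refine (convex_domSet _).integral_mem (isClosed_domSet (isCompact_hypoSet hΞc hQu hC e)) ?_
    (hc.prodMk hQ)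
  filter_upwards [hae] with x hx
  exact ⟨_, mem_hypoSet hC e hx, _, mem_hypoSet hC e hx, 1, 0, by simp⟩

/-- (Wasserstein worst case attained by two-point conditionals.) The
worst-case expected value over the Wasserstein ambiguity set around the empirical
distribution `∑ i, pe i • δ_{ξe i}` is attained, and equals the maximum of the values
attainable by distributions whose conditional given each empirical sample is supported
on at most two points. -/
theorem wasserstein_WCEV_two_point
    (d N : ℕ) (Ξ : Set (EuclideanSpace ℝ (Fin d)))
    (hΞne : Ξ.Nonempty) (hΞc : IsCompact Ξ)
    (Q : EuclideanSpace ℝ (Fin d) → ℝ)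
    (hQu : UpperSemicontinuousOn Q Ξ) (hQb : ∃ C, ∀ x ∈ Ξ, |Q x| ≤ C)
    (ξe : Fin N → EuclideanSpace ℝ (Fin d)) (hξe : ∀ i, ξe i ∈ Ξ)
    (pe : Fin N → ℝ) (hpe : ∀ i, 0 < pe i) (hpes : ∑ i, pe i = 1)
    (r : ℝ) (hr : 0 ≤ r) :
    ∃ v : ℝ,
      IsGreatest {w : ℝ | ∃ P : Fin N → Measure (EuclideanSpace ℝ (Fin d)),
          (∀ i, IsProbabilityMeasure (P i)) ∧ (∀ i, P i Ξᶜ = 0) ∧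
          (∑ i, pe i * ∫ x, ‖x - ξe i‖ ∂(P i)) ≤ r ∧
          w = ∑ i, pe i * ∫ x, Q x ∂(P i)} v ∧
      IsGreatest {w : ℝ | ∃ (ξ1 ξ2 : Fin N → EuclideanSpace ℝ (Fin d))
            (p1 p2 : Fin N → ℝ),
          (∀ i, ξ1 i ∈ Ξ) ∧ (∀ i, ξ2 i ∈ Ξ) ∧
          (∀ i, 0 ≤ p1 i) ∧ (∀ i, 0 ≤ p2 i) ∧ (∀ i, p1 i + p2 i = 1) ∧
          (∑ i, pe i * (‖ξ1 i - ξe i‖ * p1 i + ‖ξ2 i - ξe i‖ * p2 i)) ≤ r ∧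
          w = ∑ i, pe i * (Q (ξ1 i) * p1 i + Q (ξ2 i) * p2 i)} v := by
  obtain ⟨C, hC⟩ := hQb
  set K := fun i => hypoSet Ξ Q C (ξe i) with hKdef
  have hK : ∀ i, IsCompact (K i) := fun i => isCompact_hypoSet hΞc hQu hC (ξe i)
  let F : Set (Fin N → ℝ × ℝ) := Set.univ.pi (fun i => mixSet (K i)) ∩
    {z | ∑ i, pe i * (z i).1 ≤ r}
  have hF : IsCompact F := (isCompact_univ_pi fun i => isCompact_mixSet (hK i)).inter_right
    (isClosed_le (by fun_prop) continuous_const)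
  have hFne : F.Nonempty := by
    refine ⟨fun i => (‖ξe i - ξe i‖, Q (ξe i)), fun i _ => ?_, ?_⟩
    · have h := mem_hypoSet hC (ξe i) (hξe i)
      have := mem_mixSet h h zero_le_one le_rfl (add_zero 1)
      simpa [hKdef] using this
    · simpa using hr
  obtain ⟨z, hz, hmax⟩ := hF.exists_isMaxOn hFne
    (f := fun z : Fin N → ℝ × ℝ => ∑ i, pe i * (z i).2) (by fun_prop)
  -- anything dominated is at most the maximum
  have hub : ∀ y : Fin N → ℝ × ℝ, (∀ i, y i ∈ domSet (K i)) → ∑ i, pe i * (y i).1 ≤ r →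
      ∑ i, pe i * (y i).2 ≤ ∑ i, pe i * (z i).2 := by
    intro y hy hyr
    choose a ha b hb s t hs ht hst h1 h2 using hy
    have hm := hmax (show (fun i => (s i * (a i).1 + t i * (b i).1,
        s i * (a i).2 + t i * (b i).2)) ∈ F from
      ⟨fun i _ => mem_mixSet (ha i) (hb i) (hs i) (ht i) (hst i),
        (Finset.sum_le_sum fun i _ => mul_le_mul_of_nonneg_left (h1 i) (hpe i).le).trans hyr⟩)
    exact (Finset.sum_le_sum fun i _ => mul_le_mul_of_nonneg_left (h2 i) (hpe i).le).trans hm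
  -- two-point solution
  have htwo : ∀ i, ∃ x1 ∈ Ξ, ∃ x2 ∈ Ξ, ∃ p1 p2 : ℝ, 0 ≤ p1 ∧ 0 ≤ p2 ∧ p1 + p2 = 1 ∧
      ‖x1 - ξe i‖ * p1 + ‖x2 - ξe i‖ * p2 ≤ (z i).1 ∧ (z i).2 ≤ Q x1 * p1 + Q x2 * p2 := by
    intro i
    obtain ⟨⟨a, b, s⟩, ⟨⟨⟨x1, q1⟩, ⟨hx1, -, hq1⟩, rfl⟩, ⟨⟨x2, q2⟩, ⟨hx2, -, hq2⟩, rfl⟩, hs, hs1⟩,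
      hzi⟩ := hz.1 i trivial
    simp only at hs hs1 hq1 hq2 hx1 hx2
    rw [← hzi]
    refine ⟨x1, hx1, x2, hx2, s, 1 - s, hs, by linarith, by ring, ?_, ?_⟩
    · simp only [Prod.fst_add, Prod.smul_fst, smul_eq_mul]
      linarith
    · simp only [Prod.snd_add, Prod.smul_snd, smul_eq_mul]
      nlinarith
  choose ξ1 h1 ξ2 h2 p1 p2 hp1 hp2 hp hcost hval using htwo
  have hcost' : (∑ i, pe i * (‖ξ1 i - ξe i‖ * p1 i + ‖ξ2 i - ξe i‖ * p2 i)) ≤ r :=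
    (Finset.sum_le_sum fun i _ => mul_le_mul_of_nonneg_left (hcost i) (hpe i).le).trans hz.2
  have hval' : ∑ i, pe i * (z i).2 ≤ ∑ i, pe i * (Q (ξ1 i) * p1 i + Q (ξ2 i) * p2 i) :=
    Finset.sum_le_sum fun i _ => mul_le_mul_of_nonneg_left (hval i) (hpe i).le
  refine ⟨∑ i, pe i * (Q (ξ1 i) * p1 i + Q (ξ2 i) * p2 i), ⟨?_, ?_⟩, ⟨?_, ?_⟩⟩
  · have hint : ∀ (i : Fin N) (f : EuclideanSpace ℝ (Fin d) → ℝ),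
        ∫ x, f x ∂(ENNReal.ofReal (p1 i) • Measure.dirac (ξ1 i) +
          ENNReal.ofReal (p2 i) • Measure.dirac (ξ2 i)) = f (ξ1 i) * p1 i + f (ξ2 i) * p2 i := by
      intro i f
      have hd : ∀ y, Integrable f (Measure.dirac y) := fun y => integrable_dirac (by simp)
      rw [integral_add_measure ((hd _).smul_measure ENNReal.ofReal_ne_top)
        ((hd _).smul_measure ENNReal.ofReal_ne_top), integral_smul_measure, integral_smul_measure,
        integral_dirac, integral_dirac, ENNReal.toReal_ofReal (hp1 i),
        ENNReal.toReal_ofReal (hp2 i), smul_eq_mul, smul_eq_mul]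
      ring
    refine ⟨fun i => ENNReal.ofReal (p1 i) • Measure.dirac (ξ1 i) +
          ENNReal.ofReal (p2 i) • Measure.dirac (ξ2 i), fun i => ⟨?_⟩, fun i => ?_, ?_, ?_⟩
    · simp [← ENNReal.ofReal_add (hp1 i) (hp2 i), hp i]
    · have hm : MeasurableSet Ξᶜ := hΞc.isClosed.measurableSet.compl
      simp [Measure.dirac_apply' _ hm, h1 i, h2 i]
    · simpa only [hint] using hcost'
    · simp only [hint]
  · rintro w ⟨P, hP, hPΞ, hPr, rfl⟩
    exact (hub (fun i => (∫ x, ‖x - ξe i‖ ∂(P i), ∫ x, Q x ∂(P i)))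
      (fun i => moment_mem hΞc hQu hC (ξe i) (P i) (hPΞ i)) hPr).trans hval'
  · exact ⟨ξ1, ξ2, p1, p2, h1, h2, hp1, hp2, hp, hcost', rfl⟩
  · rintro w ⟨x1, x2, q1, q2, hx1, hx2, hq1, hq2, hq, hqr, rfl⟩
    exact (hub (fun i => (‖x1 i - ξe i‖ * q1 i + ‖x2 i - ξe i‖ * q2 i,
        Q (x1 i) * q1 i + Q (x2 i) * q2 i))
      (fun i => ⟨_, mem_hypoSet hC (ξe i) (hx1 i), _, mem_hypoSet hC (ξe i) (hx2 i), q1 i, q2 i,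
        hq1 i, hq2 i, hq i, by simp only; linarith, by simp only; linarith⟩) hqr).trans hval'
end

section
/- Let Ξ be a nonempty compact subset of ℝ^d, let Q : Ξ → ℝ be bounded and upper semicontinuous, let 𝒵 be a nonempty finite set, let ψ_1, …, ψ_m : Ξ × 𝒵 → ℝ with ψ_i(·, z) continuous on Ξ for every z ∈ 𝒵, and let γ_1, …, γ_m : 𝒵 → ℝ. Suppose the mixed-integer ambiguity set 𝒫^I = { (P, z) : z ∈ 𝒵, P a Borel probability measure on Ξ with ∫_Ξ ψ_i(ξ, z) dP(ξ) ≤ γ_i(z) for all i } is nonempty. Then sup_{(P,z) ∈ 𝒫^I} ∫_Ξ Q dP is attained, and it equals the maximum of ∑_{j=1}^{m+1} p_j Q(ξ_j) over all z ∈ 𝒵, ξ_1, …, ξ_{m+1} ∈ Ξ and p_1, …, p_{m+1} ≥ 0 with ∑_j p_j = 1 and ∑_j p_j ψ_i(ξ_j, z) ≤ γ_i(z) for every i ∈ {1,…,m}. -/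
open MeasureTheory

lemma exists_dir (m n : ℕ) (hn : m + 1 < n) (a : Fin n → Fin m → ℝ) (t : Fin n → ℝ) :
    ∃ q : Fin n → ℝ, (∃ j, q j < 0) ∧ ∑ j, q j = 0 ∧ (∀ i, ∑ j, q j * a j i = 0) ∧
      0 ≤ ∑ j, q j * t j := by
  let L : (Fin n → ℝ) →ₗ[ℝ] (Fin m → ℝ) × ℝ :=
    { toFun := fun q => (fun i => ∑ j, q j * a j i, ∑ j, q j)
      map_add' := by
        intro x y
        ext <;> simp [add_mul, Finset.sum_add_distrib]
      map_smul' := by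
        intro c x
        ext <;> simp [mul_assoc, Finset.mul_sum] }
  have hk : LinearMap.ker L ≠ ⊥ := by
    apply LinearMap.ker_ne_bot_of_finrank_lt
    simpa using hn
  obtain ⟨q, hq, hq0⟩ := (Submodule.ne_bot_iff _).mp hk
  have hL : L q = 0 := hq
  have h2 : ∑ j, q j = 0 := congrArg Prod.snd hL
  have h1 : ∀ i, ∑ j, q j * a j i = 0 := fun i => congrFun (congrArg Prod.fst hL) i
  have key : ∀ r : Fin n → ℝ, r ≠ 0 → ∑ j, r j = 0 → ∃ j, r j < 0 := by
    intro r hr hs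
    by_contra! h
    apply hr
    ext j
    exact (Finset.sum_eq_zero_iff_of_nonneg (fun j _ => h j)).1 hs j (Finset.mem_univ j)
  rcases le_total 0 (∑ j, q j * t j) with h | h
  · exact ⟨q, key q hq0 h2, h2, h1, h⟩
  · refine ⟨-q, key _ (by simpa using hq0) (by simp [h2]), by simp [h2], ?_, ?_⟩
    · intro i
      simp [h1 i]
    · simpa using h

lemma reduce_step (m n : ℕ) (hn : m + 1 < n) (a : Fin n → Fin m → ℝ) (t : Fin n → ℝ)
    (p : Fin n → ℝ) (hp : ∀ j, 0 ≤ p j) :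
    ∃ p' : Fin n → ℝ, (∀ j, 0 ≤ p' j) ∧ (∃ j, p' j = 0) ∧ ∑ j, p' j = ∑ j, p j ∧
      (∀ i, ∑ j, p' j * a j i = ∑ j, p j * a j i) ∧
      ∑ j, p j * t j ≤ ∑ j, p' j * t j := by
  obtain ⟨q, ⟨j1, hj1⟩, h0, ha, ht⟩ := exists_dir m n hn a t
  obtain ⟨j0, hj0, hmin⟩ := Finset.exists_min_image (Finset.univ.filter fun j => q j < 0)
    (fun j => p j / (-q j)) ⟨j1, by simpa using hj1⟩
  have hq0 : q j0 < 0 := by simpa using hj0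
  set s := p j0 / (-q j0) with hs
  have hs0 : 0 ≤ s := div_nonneg (hp _) (by linarith)
  refine ⟨fun j => p j + s * q j, ?_, ⟨j0, ?_⟩, ?_, ?_, ?_⟩
  · intro j
    by_cases hj : q j < 0
    · have := hmin j (by simpa using hj)
      rw [le_div_iff₀ (by linarith)] at this
      simp only
      linarith
    · have := mul_nonneg hs0 (not_lt.1 hj)
      have := hp j
      simp only
      linarith
  · have : s * (-q j0) = p j0 := div_mul_cancel₀ _ (by linarith)
    simp only
    linarith
  · simp [Finset.sum_add_distrib, ← Finset.mul_sum, h0]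
  · intro i
    simp [add_mul, Finset.sum_add_distrib, mul_assoc, ← Finset.mul_sum, ha]
  · simp only [add_mul, Finset.sum_add_distrib, mul_assoc, ← Finset.mul_sum]
    have := mul_nonneg hs0 ht
    linarith

lemma reduce_all {X : Type*} (m : ℕ) (S : Set X) (a : X → Fin m → ℝ) (t : X → ℝ) (k : ℕ) :
    ∀ (x : Fin (m + 1 + k) → X) (p : Fin (m + 1 + k) → ℝ), (∀ j, x j ∈ S) → (∀ j, 0 ≤ p j) →
    ∃ (y : Fin (m + 1) → X) (p' : Fin (m + 1) → ℝ), (∀ j, y j ∈ S) ∧ (∀ j, 0 ≤ p' j) ∧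
      ∑ j, p' j = ∑ j, p j ∧
      (∀ i, ∑ j, p' j * a (y j) i = ∑ j, p j * a (x j) i) ∧
      ∑ j, p j * t (x j) ≤ ∑ j, p' j * t (y j) := by
  induction k with
  | zero => exact fun x p hx hp => ⟨x, p, hx, hp, rfl, fun _ => rfl, le_rfl⟩
  | succ k ih =>
    intro x p hx hp
    obtain ⟨p', hp', ⟨j0, hj0⟩, h1, h2, h3⟩ := reduce_step m (m + 1 + (k + 1)) (by omega)
      (fun j => a (x j)) (fun j => t (x j)) p hp
    obtain ⟨y, r, hy, hr, g1, g2, g3⟩ := ih (fun j => x (Fin.succAbove (n := m + 1 + k) j0 j))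
      (fun j => p' (Fin.succAbove (n := m + 1 + k) j0 j)) (fun j => hx _) (fun j => hp' _)
    have hsum : ∀ f : Fin (m + 1 + k + 1) → ℝ, f j0 = 0 →
        ∑ j, f (Fin.succAbove (n := m + 1 + k) j0 j) = ∑ j, f j := by
      intro f hf
      rw [Fin.sum_univ_succAbove f j0, hf, zero_add]
    refine ⟨y, r, hy, hr, ?_, ?_, ?_⟩
    · rw [g1, ← h1]
      exact hsum p' hj0
    · intro i
      rw [g2, ← h2]
      exact hsum (fun j => p' j * a (x j) i) (by simp [hj0])
    · refine le_trans h3 (le_trans (le_of_eq ?_) g3)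
      exact (hsum (fun j => p' j * t (x j)) (by simp [hj0])).symm

lemma reduce_fintype {X ι : Type*} [Fintype ι] (m : ℕ) (S : Set X) (a : X → Fin m → ℝ)
    (t : X → ℝ) (x : ι → X) (p : ι → ℝ) (hx : ∀ j, x j ∈ S) (hp : ∀ j, 0 ≤ p j)
    (hp1 : ∑ j, p j = 1) :
    ∃ (y : Fin (m + 1) → X) (p' : Fin (m + 1) → ℝ), (∀ j, y j ∈ S) ∧ (∀ j, 0 ≤ p' j) ∧
      ∑ j, p' j = 1 ∧
      (∀ i, ∑ j, p' j * a (y j) i = ∑ j, p j * a (x j) i) ∧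
      ∑ j, p j * t (x j) ≤ ∑ j, p' j * t (y j) := by
  have hne : Nonempty ι := by
    by_contra h
    rw [not_nonempty_iff] at h
    simp at hp1
  obtain ⟨i0⟩ := hne
  let e := Fintype.equivFin ι
  obtain ⟨y, r, hy, hr, g1, g2, g3⟩ := reduce_all m S a t (Fintype.card ι)
    (Fin.addCases (fun _ => x i0) (fun j => x (e.symm j)))
    (Fin.addCases (fun _ => 0) (fun j => p (e.symm j)))
    (by intro j; refine Fin.addCases ?_ ?_ j <;> intro j <;> simp [hx])
    (by intro j; refine Fin.addCases ?_ ?_ j <;> intro j <;> simp [hp])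
  simp only [Fin.sum_univ_add (a := m + 1) (b := Fintype.card ι), Fin.addCases_left, Fin.addCases_right, zero_mul,
    Finset.sum_const_zero, zero_add] at g1 g2 g3
  refine ⟨y, r, hy, hr, ?_, ?_, ?_⟩
  · rw [g1, ← hp1]
    exact e.symm.sum_comp p
  · intro i
    rw [g2]
    exact e.symm.sum_comp (fun j => p j * a (x j) i)
  · refine le_trans (le_of_eq ?_) g3
    exact (e.symm.sum_comp (fun j => p j * t (x j))).symm

lemma isCompact_hull (m : ℕ) (S : Set ((Fin m → ℝ) × ℝ)) (hS : IsCompact S) :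
    IsCompact (convexHull ℝ S) := by
  have himg : convexHull ℝ S =
      (fun q : (Fin (m + 1 + 1) → (Fin m → ℝ) × ℝ) × (Fin (m + 1 + 1) → ℝ) =>
        ∑ j, q.2 j • q.1 j) '' ((Set.univ.pi fun _ => S) ×ˢ stdSimplex ℝ (Fin (m + 1 + 1))) := by
    apply Set.Subset.antisymm
    · intro A hA
      obtain ⟨ι, _, w, y, hw0, hw1, hy, hsum⟩ := mem_convexHull_iff_exists_fintype.1 hA
      obtain ⟨g, p, hg, hp, hp1, hpa, -⟩ := reduce_fintype (m + 1) S
        (fun q => Fin.snoc (α := fun _ => ℝ) q.1 q.2) (fun _ => 0) y w hy hw0 hw1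
      refine ⟨(g, p), ⟨fun j _ => hg j, hp, hp1⟩, ?_⟩
      rw [← hsum]
      apply Prod.ext
      · ext i
        have := hpa (Fin.castSucc i)
        simp only [Fin.snoc_castSucc] at this
        simpa [Prod.fst_sum, Finset.sum_apply] using this
      · have := hpa (Fin.last m)
        simp only [Fin.snoc_last] at this
        simpa [Prod.snd_sum] using this
    · rintro _ ⟨⟨g, p⟩, ⟨hg, hp, hp1⟩, rfl⟩
      exact mem_convexHull_of_exists_fintype p g hp hp1 (fun j => hg j trivial) rfl
  rw [himg]
  refine ((isCompact_univ_pi fun _ => hS).prod (isCompact_stdSimplex ℝ _)).image ?_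
  fun_prop

/-- (Mixed-integer ambiguity sets.) For a finite nonempty discrete
set `Z`, moment functions `ψ_i (·, z)` continuous on the nonempty compact set `Ξ`, and
a nonempty mixed-integer ambiguity set, the worst-case expected value of a bounded
upper semicontinuous `Q` is attained, and equals the maximum of
`∑_{j=1}^{m+1} p_j Q(ξ_j)` over all `z ∈ Z` and `(m+1)`-point distributions feasible
for the constraints at `z`. -/
theorem mixed_integer_WCEV_attained_discrete
    (d m : ℕ) (Ξ : Set (EuclideanSpace ℝ (Fin d)))
    (hΞne : Ξ.Nonempty) (hΞc : IsCompact Ξ)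
    (Q : EuclideanSpace ℝ (Fin d) → ℝ)
    (hQu : UpperSemicontinuousOn Q Ξ) (hQb : ∃ C, ∀ x ∈ Ξ, |Q x| ≤ C)
    (Z : Type*) [Fintype Z] [Nonempty Z]
    (ψ : Fin m → EuclideanSpace ℝ (Fin d) → Z → ℝ)
    (hψc : ∀ i z, ContinuousOn (fun x => ψ i x z) Ξ)
    (γ : Fin m → Z → ℝ)
    (hamb : ∃ (P : Measure (EuclideanSpace ℝ (Fin d))) (z : Z),
      IsProbabilityMeasure P ∧ P Ξᶜ = 0 ∧ ∀ i, ∫ x, ψ i x z ∂P ≤ γ i z) :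
    ∃ v : ℝ,
      IsGreatest {w : ℝ | ∃ (P : Measure (EuclideanSpace ℝ (Fin d))) (z : Z),
          (IsProbabilityMeasure P ∧ P Ξᶜ = 0 ∧ ∀ i, ∫ x, ψ i x z ∂P ≤ γ i z) ∧
          (∫ x, Q x ∂P) = w} v ∧
      IsGreatest {w : ℝ | ∃ (z : Z) (ξ : Fin (m + 1) → EuclideanSpace ℝ (Fin d))
            (p : Fin (m + 1) → ℝ),
          (∀ j, ξ j ∈ Ξ) ∧ (∀ j, 0 ≤ p j) ∧ (∑ j, p j = 1) ∧
          (∀ i, ∑ j, p j * ψ i (ξ j) z ≤ γ i z) ∧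
          (∑ j, p j * Q (ξ j)) = w} v := by
  classical
  obtain ⟨C, hC⟩ := hQb
  -- the compact hypograph
  have hKc : IsCompact {q : EuclideanSpace ℝ (Fin d) × ℝ |
      (q.1 ∈ Ξ ∧ q.2 ≤ Q q.1) ∧ -C ≤ q.2} := by
    refine (hΞc.prod (isCompact_Icc (a := -C) (b := C))).of_isClosed_subset ?_ ?_
    · exact ((upperSemicontinuousOn_iff_isClosed_hypograph hΞc.isClosed).1 hQu).inter
        (isClosed_le continuous_const continuous_snd)
    · rintro ⟨x, t⟩ ⟨⟨h1, h2⟩, h3⟩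
      exact ⟨h1, h3, le_trans h2 (abs_le.1 (hC x h1)).2⟩
  set K := {q : EuclideanSpace ℝ (Fin d) × ℝ | (q.1 ∈ Ξ ∧ q.2 ≤ Q q.1) ∧ -C ≤ q.2} with hK
  let F : Z → EuclideanSpace ℝ (Fin d) × ℝ → (Fin m → ℝ) × ℝ :=
    fun z q => (fun i => ψ i q.1 z, q.2)
  have hFc : ∀ z, IsCompact (F z '' K) := by
    intro z
    apply hKc.image_of_continuousOn
    refine ContinuousOn.prodMk (continuousOn_pi.2 fun i => ?_) continuousOn_snd
    exact (hψc i z).comp continuousOn_fst fun q hq => hq.1.1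
  let H : Z → Set ((Fin m → ℝ) × ℝ) :=
    fun z => convexHull ℝ (F z '' K) ∩ {q | ∀ i, q.1 i ≤ γ i z}
  have hHc : ∀ z, IsCompact (H z) := by
    intro z
    refine (isCompact_hull m _ (hFc z)).inter_right ?_
    simp only [Set.setOf_forall]
    exact isClosed_iInter fun i => isClosed_le (by fun_prop) continuous_const
  have hVc : IsCompact (⋃ z, Prod.snd '' H z) :=
    isCompact_iUnion fun z => (hHc z).image continuous_snd
  -- integrability
  have hrestr : ∀ P : Measure (EuclideanSpace ℝ (Fin d)), P Ξᶜ = 0 → P.restrict Ξ = P := by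
    intro P hP
    exact Measure.restrict_eq_self_of_ae_mem (by rw [ae_iff]; exact hP)
  have hmem : ∀ (P : Measure (EuclideanSpace ℝ (Fin d))) (z : Z),
      (IsProbabilityMeasure P ∧ P Ξᶜ = 0 ∧ ∀ i, ∫ x, ψ i x z ∂P ≤ γ i z) →
      (∫ x, Q x ∂P) ∈ ⋃ z, Prod.snd '' H z := by
    rintro P z ⟨hP, hP0, hPγ⟩
    have hae : ∀ᵐ x ∂P, x ∈ Ξ := by rw [ae_iff]; exact hP0
    have hQm : AEMeasurable Q P := by
      rw [← hrestr P hP0]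
      exact aemeasurable_restrict_of_measurable_subtype hΞc.measurableSet
        (upperSemicontinuousOn_iff_restrict.2 hQu).measurable
    have hQi : Integrable Q P := by
      refine Integrable.of_bound hQm.aestronglyMeasurable C ?_
      filter_upwards [hae] with x hx
      exact hC x hx
    have hψi : ∀ i, Integrable (fun x => ψ i x z) P := by
      intro i
      have := (hψc i z).integrableOn_compact (μ := P) hΞc
      rwa [IntegrableOn, hrestr P hP0] at this
    have hψi' : Integrable (fun x => fun i => ψ i x z) P := Integrable.of_eval hψi
    have hint := (convex_convexHull ℝ (F z '' K)).integral_mem (isCompact_hull m _ (hFc z)).isClosed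
      (μ := P) (f := fun x => ((fun i => ψ i x z, Q x) : (Fin m → ℝ) × ℝ)) (by
        filter_upwards [hae] with x hx
        exact subset_convexHull _ _ ⟨(x, Q x), ⟨⟨hx, le_rfl⟩, (abs_le.1 (hC x hx)).1⟩, rfl⟩)
      (hψi'.prodMk hQi)
    rw [integral_pair hψi' hQi] at hint
    refine Set.mem_iUnion.2 ⟨z, _, ⟨hint, ?_⟩, rfl⟩
    intro i
    simp only
    rw [eval_integral hψi]
    exact hPγ i
  have hfin : ∀ (z : Z) (ξ : Fin (m + 1) → EuclideanSpace ℝ (Fin d)) (p : Fin (m + 1) → ℝ),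
      (∀ j, ξ j ∈ Ξ) → (∀ j, 0 ≤ p j) → (∑ j, p j = 1) →
      (∀ i, ∑ j, p j * ψ i (ξ j) z ≤ γ i z) →
      ∃ P : Measure (EuclideanSpace ℝ (Fin d)),
        (IsProbabilityMeasure P ∧ P Ξᶜ = 0 ∧ ∀ i, ∫ x, ψ i x z ∂P ≤ γ i z) ∧
          (∫ x, Q x ∂P) = ∑ j, p j * Q (ξ j) := by
    intro z ξ p hξ hp hp1 hpγ
    have hI : ∀ f : EuclideanSpace ℝ (Fin d) → ℝ,
        ∫ x, f x ∂(∑ j, ENNReal.ofReal (p j) • Measure.dirac (ξ j)) = ∑ j, p j * f (ξ j) := by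
      intro f
      rw [integral_finsetSum_measure]
      · refine Finset.sum_congr rfl fun j _ => ?_
        rw [integral_smul_measure, integral_dirac, ENNReal.toReal_ofReal (hp j), smul_eq_mul]
      · intro j _
        exact (integrable_dirac (by simp)).smul_measure ENNReal.ofReal_ne_top
    refine ⟨∑ j, ENNReal.ofReal (p j) • Measure.dirac (ξ j), ⟨⟨?_⟩, ?_, ?_⟩, hI Q⟩
    · simp [← ENNReal.ofReal_sum_of_nonneg fun j _ => hp j, hp1]
    · simp [Measure.dirac_apply' _ hΞc.measurableSet.compl, hξ]
    · intro i
      rw [hI]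
      exact hpγ i
  obtain ⟨P0, z0, hP0⟩ := hamb
  obtain ⟨v, hv⟩ := hVc.exists_isGreatest ⟨_, hmem P0 z0 hP0⟩
  obtain ⟨z, ⟨⟨A, v'⟩, ⟨hA, hAγ⟩, hvv⟩⟩ := Set.mem_iUnion.1 hv.1
  simp only at hvv
  subst hvv
  obtain ⟨ι, _, w, y, hw0, hw1, hy, hsum⟩ := mem_convexHull_iff_exists_fintype.1 hA
  choose u hu huy using hy
  obtain ⟨g, p, hg, hp, hp1, hpa, hpt⟩ := reduce_fintype m K (fun q i => ψ i q.1 z)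
    (fun q => q.2) u w hu hw0 hw1
  have e1 : ∀ i, ∑ j, w j * ψ i (u j).1 z = A i := by
    intro i
    have := congrFun (congrArg Prod.fst hsum) i
    simp only [← huy, F, Prod.fst_sum, Finset.sum_apply] at this
    simpa using this
  have e2 : ∑ j, w j * (u j).2 = v' := by
    have := congrArg Prod.snd hsum
    simp only [← huy, F, Prod.snd_sum] at this
    simpa using this
  have hγ : ∀ i, ∑ j, p j * ψ i (g j).1 z ≤ γ i z := by
    intro i
    rw [hpa i, e1 i]
    exact hAγ i
  obtain ⟨P, hP, hPQ⟩ := hfin z (fun j => (g j).1) p (fun j => (hg j).1.1) hp hp1 hγ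
  have hval : ∑ j, p j * Q (g j).1 = v' := by
    apply le_antisymm
    · rw [← hPQ]
      exact hv.2 (hmem P z hP)
    · rw [← e2]
      exact hpt.trans (Finset.sum_le_sum fun j _ =>
        mul_le_mul_of_nonneg_left (hg j).1.2 (hp j))
  refine ⟨v', ⟨⟨P, z, hP, hPQ.trans hval⟩, ?_⟩,
    ⟨⟨z, fun j => (g j).1, p, fun j => (hg j).1.1, hp, hp1, hγ, hval⟩, ?_⟩⟩
  · rintro _ ⟨P', z', hP', rfl⟩
    exact hv.2 (hmem P' z' hP')
  · rintro _ ⟨z', ξ, p', hξ, hp', hp1', hγ', rfl⟩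
    obtain ⟨P', hP', hPQ'⟩ := hfin z' ξ p' hξ hp' hp1' hγ'
    rw [← hPQ']
    exact hv.2 (hmem P' z' hP')
end

section
/- Let Ξ be a nonempty compact subset of ℝ^d, let Q : Ξ → ℝ be bounded Borel measurable, let 𝒵 be a nonempty finite set, let ψ_1, …, ψ_m : Ξ × 𝒵 → ℝ be bounded with ψ_i(·, z) Borel measurable for each z, let γ_1, …, γ_m : 𝒵 → ℝ, and let 𝒫^I = { (P, z) : z ∈ 𝒵, P a Borel probability measure on Ξ with ∫_Ξ ψ_i(ξ, z) dP(ξ) ≤ γ_i(z) for all i }. Let η* ∈ ℝ and v* ∈ ℝ, and suppose: (a) there exist z⁰ ∈ 𝒵, points ξ_1, …, ξ_n ∈ Ξ and p_1, …, p_n ≥ 0 with ∑_j p_j = 1, ∑_j p_j ψ_i(ξ_j, z⁰) ≤ γ_i(z⁰) for all i, and ∑_j p_j Q(ξ_j) = η*; and (b) for every z ∈ 𝒵 there exist α_z ∈ ℝ and β_{z,1}, …, β_{z,m} ≥ 0 with α_z + ∑_{i=1}^m γ_i(z) β_{z,i} ≤ η* and Q(ξ) − α_z − ∑_{i=1}^m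 ψ_i(ξ, z) β_{z,i} ≤ v* for every ξ ∈ Ξ. Then η* ≤ sup_{(P,z) ∈ 𝒫^I} ∫_Ξ Q dP ≤ η* + v*. -/
open MeasureTheory

/-- (Column-generation bounds for mixed-integer ambiguity sets.)
If `η*` is the value of a discrete distribution feasible for some `z⁰ ∈ Z`, and for
every `z ∈ Z` there are dual multipliers `(α_z, β_z)` with `β_z ≥ 0`,
`α_z + ∑_i γ_i(z) β_{z,i} ≤ η*`, and reduced cost at most `v*` on all of `Ξ`, then
`η* ≤ sup_{(P,z) ∈ 𝒫^I} ∫ Q dP ≤ η* + v*`. -/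
theorem mixed_integer_pricing_bounds
    (d m n : ℕ) (Ξ : Set (EuclideanSpace ℝ (Fin d)))
    (hΞne : Ξ.Nonempty) (hΞc : IsCompact Ξ)
    (Q : EuclideanSpace ℝ (Fin d) → ℝ)
    (hQm : Measurable Q) (hQb : ∃ C, ∀ x ∈ Ξ, |Q x| ≤ C)
    (Z : Type*) [Fintype Z] [Nonempty Z]
    (ψ : Fin m → EuclideanSpace ℝ (Fin d) → Z → ℝ)
    (hψm : ∀ i z, Measurable (fun x => ψ i x z))
    (hψb : ∀ i z, ∃ C, ∀ x ∈ Ξ, |ψ i x z| ≤ C)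
    (γ : Fin m → Z → ℝ)
    (η v : ℝ)
    (hprimal : ∃ (z₀ : Z) (ξ : Fin n → EuclideanSpace ℝ (Fin d)) (p : Fin n → ℝ),
      (∀ j, ξ j ∈ Ξ) ∧ (∀ j, 0 ≤ p j) ∧ (∑ j, p j = 1) ∧
      (∀ i, ∑ j, p j * ψ i (ξ j) z₀ ≤ γ i z₀) ∧
      (∑ j, p j * Q (ξ j)) = η)
    (hdual : ∀ z : Z, ∃ (α : ℝ) (β : Fin m → ℝ),
      (∀ i, 0 ≤ β i) ∧ α + ∑ i, γ i z * β i ≤ η ∧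
      ∀ x ∈ Ξ, Q x - α - ∑ i, ψ i x z * β i ≤ v) :
    η ≤ sSup {w : ℝ | ∃ (P : Measure (EuclideanSpace ℝ (Fin d))) (z : Z),
        (IsProbabilityMeasure P ∧ P Ξᶜ = 0 ∧ ∀ i, ∫ x, ψ i x z ∂P ≤ γ i z) ∧
        (∫ x, Q x ∂P) = w} ∧
      sSup {w : ℝ | ∃ (P : Measure (EuclideanSpace ℝ (Fin d))) (z : Z),
        (IsProbabilityMeasure P ∧ P Ξᶜ = 0 ∧ ∀ i, ∫ x, ψ i x z ∂P ≤ γ i z) ∧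
        (∫ x, Q x ∂P) = w} ≤ η + v := by
  set S : Set ℝ := {w : ℝ | ∃ (P : Measure (EuclideanSpace ℝ (Fin d))) (z : Z),
        (IsProbabilityMeasure P ∧ P Ξᶜ = 0 ∧ ∀ i, ∫ x, ψ i x z ∂P ≤ γ i z) ∧
        (∫ x, Q x ∂P) = w} with hS
  have hub : ∀ w ∈ S, w ≤ η + v := by
    rintro w ⟨P, z, ⟨hP, hPΞ, hm⟩, rfl⟩
    obtain ⟨α, β, hβ, hval, hred⟩ := hdual z
    have hae : ∀ᵐ x ∂P, x ∈ Ξ := by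
      rw [ae_iff]; exact hPΞ
    have hψi : ∀ i, Integrable (fun x => ψ i x z) P := by
      intro i
      obtain ⟨C, hC⟩ := hψb i z
      refine Integrable.of_bound (hψm i z).aestronglyMeasurable C ?_
      filter_upwards [hae] with x hx
      simpa [Real.norm_eq_abs] using hC x hx
    have hQi : Integrable Q P := by
      obtain ⟨C, hC⟩ := hQb
      refine Integrable.of_bound hQm.aestronglyMeasurable C ?_
      filter_upwards [hae] with x hx
      simpa [Real.norm_eq_abs] using hC x hx
    have hsum : Integrable (fun x => ∑ i, ψ i x z * β i) P :=
      integrable_finsetSum _ (fun i _ => (hψi i).mul_const _)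
    have h1 : ∫ x, Q x ∂P ≤ ∫ x, ((v + α) + ∑ i, ψ i x z * β i) ∂P := by
      refine integral_mono_ae hQi ((integrable_const _).add hsum) ?_
      filter_upwards [hae] with x hx
      have := hred x hx
      linarith
    have h2 : ∫ x, ((v + α) + ∑ i, ψ i x z * β i) ∂P
        = (v + α) + ∑ i, (∫ x, ψ i x z ∂P) * β i := by
      rw [integral_add (integrable_const _) hsum,
        integral_finsetSum _ (fun i _ => (hψi i).mul_const _)]
      simp [integral_mul_const]
    have h3 : ∑ i, (∫ x, ψ i x z ∂P) * β i ≤ ∑ i, γ i z * β i :=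
      Finset.sum_le_sum (fun i _ => mul_le_mul_of_nonneg_right (hm i) (hβ i))
    linarith
  have hmem : η ∈ S := by
    obtain ⟨z₀, ξ, p, hξ, hp, hp1, hfeas, hη⟩ := hprimal
    have hint : ∀ f : EuclideanSpace ℝ (Fin d) → ℝ,
        ∫ x, f x ∂(∑ j, ENNReal.ofReal (p j) • Measure.dirac (ξ j)) = ∑ j, p j * f (ξ j) := by
      intro f
      rw [integral_finsetSum_measure]
      · refine Finset.sum_congr rfl (fun j _ => ?_)
        rw [integral_smul_measure, integral_dirac, ENNReal.toReal_ofReal (hp j), smul_eq_mul]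
      · intro j _
        exact (integrable_dirac (by simp)).smul_measure ENNReal.ofReal_ne_top
    refine ⟨∑ j, ENNReal.ofReal (p j) • Measure.dirac (ξ j), z₀, ⟨⟨?_⟩, ?_, ?_⟩, ?_⟩
    · simp only [Measure.finsetSum_apply, Measure.smul_apply, measure_univ, smul_eq_mul, mul_one]
      rw [← ENNReal.ofReal_sum_of_nonneg (fun j _ => hp j), hp1, ENNReal.ofReal_one]
    · simp only [Measure.finsetSum_apply, Measure.smul_apply, smul_eq_mul]
      refine Finset.sum_eq_zero (fun j _ => ?_)
      rw [Measure.dirac_apply' _ hΞc.isClosed.measurableSet.compl]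
      simp [hξ j]
    · intro i
      rw [hint (fun x => ψ i x z₀)]
      exact hfeas i
    · rw [hint Q]; exact hη
  exact ⟨le_csSup ⟨η + v, hub⟩ hmem, csSup_le ⟨η, hmem⟩ hub⟩
end

section
/- Let Ξ be a nonempty compact subset of ℝ^d, let Q : Ξ → ℝ and ψ_1, …, ψ_m : Ξ → ℝ be bounded Borel measurable, let γ_1, …, γ_m ∈ ℝ, let α* ∈ ℝ, β*_1, …, β*_m ≥ 0, and ε, δ > 0. Suppose |(Q(ξ) − ∑_{i=1}^m ψ_i(ξ) β*_i) − (Q(ξ') − ∑_{i=1}^m ψ_i(ξ') β*_i)| ≤ ε whenever ξ, ξ' ∈ Ξ and ‖ξ − ξ'‖ ≤ δ. Let S, S' ⊆ Ξ be nonempty sets such that every point of S' is within Euclidean distance δ of some point of S (in particular this holds when the Hausdorff distance between S' and S is at most δ), and suppose α* + ∑_{i=1}^m ψ_i(ξ) β*_i ≥ Q(ξ) for every ξ ∈ S. Then α* + ε + ∑_{i=1}^m ψ_i(ξ) β*_i ≥ Q(ξ) for every ξ ∈ S'; consequently, every finitely supported probability measure ∑_j p_j δ_{ξ_j} with all ξ_j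 ∈ S' and ∑_j p_j ψ_i(ξ_j) ≤ γ_i for every i satisfies ∑_j p_j Q(ξ_j) ≤ α* + ε + ∑_{i=1}^m γ_i β*_i. -/
open MeasureTheory

/-- (Perturbation of dual feasibility across nearby scenario sets.)
If the reduced-cost profile `Q − ∑_i ψ_i β*_i` is uniformly continuous with modulus
`(ε, δ)` on `Ξ`, every point of `S'` lies within distance `δ` of a point of `S`, and
`(α*, β*)` is dual feasible on `S`, then `(α* + ε, β*)` is dual feasible on `S'`;
consequently every feasible finitely supported distribution on `S'` has objective at
most `α* + ε + ∑_i γ_i β*_i`. -/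
theorem dual_feasibility_perturbation
    (d m : ℕ) (Ξ : Set (EuclideanSpace ℝ (Fin d)))
    (hΞne : Ξ.Nonempty) (hΞc : IsCompact Ξ)
    (Q : EuclideanSpace ℝ (Fin d) → ℝ)
    (hQm : Measurable Q) (hQb : ∃ C, ∀ x ∈ Ξ, |Q x| ≤ C)
    (ψ : Fin m → EuclideanSpace ℝ (Fin d) → ℝ)
    (hψm : ∀ i, Measurable (ψ i)) (hψb : ∀ i, ∃ C, ∀ x ∈ Ξ, |ψ i x| ≤ C)
    (γ : Fin m → ℝ) (α : ℝ) (β : Fin m → ℝ) (hβ : ∀ i, 0 ≤ β i)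
    (ε δ : ℝ) (hε : 0 < ε) (hδ : 0 < δ)
    (hunif : ∀ x ∈ Ξ, ∀ y ∈ Ξ, ‖x - y‖ ≤ δ →
      |(Q x - ∑ i, ψ i x * β i) - (Q y - ∑ i, ψ i y * β i)| ≤ ε)
    (S S' : Set (EuclideanSpace ℝ (Fin d)))
    (hS : S ⊆ Ξ) (hS' : S' ⊆ Ξ) (hSne : S.Nonempty) (hS'ne : S'.Nonempty)
    (hclose : ∀ y ∈ S', ∃ x ∈ S, ‖y - x‖ ≤ δ)
    (hdualS : ∀ x ∈ S, Q x ≤ α + ∑ i, ψ i x * β i) :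
    (∀ y ∈ S', Q y ≤ α + ε + ∑ i, ψ i y * β i) ∧
    (∀ (n : ℕ) (ξv : Fin n → EuclideanSpace ℝ (Fin d)) (p : Fin n → ℝ),
      (∀ j, ξv j ∈ S') → (∀ j, 0 ≤ p j) → (∑ j, p j = 1) →
      (∀ i, ∑ j, p j * ψ i (ξv j) ≤ γ i) →
      ∑ j, p j * Q (ξv j) ≤ α + ε + ∑ i, γ i * β i) := by
  have key : ∀ y ∈ S', Q y ≤ α + ε + ∑ i, ψ i y * β i := by
    intro y hy
    obtain ⟨x, hx, hxy⟩ := hclose y hy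
    have h1 := (abs_le.mp (hunif y (hS' hy) x (hS hx) hxy)).2
    have h2 := hdualS x hx
    linarith
  refine ⟨key, ?_⟩
  intro n ξv p hξ hp hsum hfeas
  calc ∑ j, p j * Q (ξv j)
      ≤ ∑ j, p j * (α + ε + ∑ i, ψ i (ξv j) * β i) :=
        Finset.sum_le_sum fun j _ => mul_le_mul_of_nonneg_left (key _ (hξ j)) (hp j)
    _ = α + ε + ∑ i, (∑ j, p j * ψ i (ξv j)) * β i := by
        simp only [mul_add, Finset.sum_add_distrib, ← Finset.sum_mul, hsum, one_mul]
        congr 1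
        simp only [Finset.mul_sum, Finset.sum_mul]
        rw [Finset.sum_comm]
        simp only [mul_assoc]
    _ ≤ α + ε + ∑ i, γ i * β i := by
        gcongr with i _
        · exact hβ i
        · exact hfeas i
end
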